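/- Suppose q satisfies condition A for x ≥ x₀ (so that 𝒩 ≠ ∅), and let Ω ⊂ 𝒩 be open and connected. Then there exists a function η(x,λ), x ∈ ℝ₊, λ ∈ Ω, nontrivial for every λ ∈ Ω, such that: η(x,λ) and η′(x,λ) (derivative in x) are continuous in (x,λ) ∈ ℝ₊×Ω; for each fixed x ∈ ℝ₊ the functions λ ↦ η(x,λ) and λ ↦ η′(x,λ) are single-valued analytic in Ω; for each λ ∈ Ω the function x ↦ η(x,λ) is a solution of −y″+(q−λ)y=0 belonging to L₂(ℝ₊), and every solution of this equation belonging to L₂(ℝ₊) is a constant multiple of η(·,λ). -/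

import Mathlib

/-!
The square integrable solutions of `-y'' + (q - lam) y = 0` form a line for every `lam ∈ 𝒩`, and
the theorem says that these lines are the fibres of a trivial holomorphic line bundle over `Ω`.

*One-dimensionality.* If `q - lam₀` satisfies condition A on `[x₁, ∞)` with `p = √(q - lam₀)`, the
quantity `Re (r y' ȳ)`, for a suitable weight `r` with `r p = 1`, is increasing along solutions, for
all `lam` near `lam₀`, at a rate bounding a positive multiple of the energy density (`EnergyData`).
A solution with positive value of this form at some point is therefore not square integrable, and
two independent square integrable solutions are excluded (`wronskian_eq_zero_of_mem_NSet`).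

*Local sections.* The solutions vanishing at `X`, normalised at `x₁`, have nonpositive form
on `[x₁, X]`, and their parameters lie in nested discs of radius `O((X - x₁)^(-1/2))`. They converge
uniformly near `lam₀` to a holomorphic family of square integrable solutions which have no zeros on
a half-line (`exists_local_section`).

*Global section.* Let `exh Ω n` be the standard compact exhaustion of `Ω`. Over a neighbourhood of
`exh Ω n` the square integrable solution `ψ` may be normalised by `ψ(ν n) = 1` for some `ν n`. The
transition factor between levels `n` and `n + 1` is `ψ(ν (n+1)) / ψ(ν n) = exp (∫ ψ'/ψ)`, the
integral being over `[ν n, ν (n+1)]`; so it has an explicit holomorphic logarithm `L n`, and only an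
additive Cousin problem `H (n+1) - H n = L n` has to be solved (`cousin`). It is solved by Runge
approximation (`runge`), which is derived from the Cauchy–Pompeiu formula (`pompeiu`) by pushing
poles out of `Ω` or to infinity. Multiplying by `exp (H n)` makes the normalised solutions agree
(`FundFam.exists_global_section`).
-/

open MeasureTheory Filter Topology Complex

noncomputable section

/-- The open sector `Π_κ = {z ≠ 0 : arg z ∈ (-π+κ, π-κ)}`. -/
def PiSector (κ : ℝ) : Set ℂ :=
  {z : ℂ | z ≠ 0 ∧ -Real.pi + κ < z.arg ∧ z.arg < Real.pi - κ}

/-- `f` is locally absolutely continuous on `[a,∞)` with a.e. derivative `f'`: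
`f'` is locally integrable there and `f` is recovered from `f'` by integration. -/
def LocACOn (f f' : ℝ → ℂ) (a : ℝ) : Prop :=
  (∀ b, a ≤ b → IntervalIntegrable f' volume a b) ∧
  ∀ x, a ≤ x → f x = f a + ∫ t in a..x, f' t

/-- `y` (with first derivative `y'`) is a solution of `-y'' + q y = f` on `ℝ₊`:
`y, y'` are locally absolutely continuous on `[0,∞)` and the a.e. derivative of
`y'` equals `q y - f`. -/
def IsSol (q f y y' : ℝ → ℂ) : Prop :=
  LocACOn y y' 0 ∧ LocACOn y' (fun x => q x * y x - f x) 0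

/-- `y` is nontrivial on `ℝ₊`. -/
def NontrivialSol (y : ℝ → ℂ) : Prop := ∃ x, 0 ≤ x ∧ y x ≠ 0

/-- membership in the weighted space `L₂(ℝ₊, w)`. -/
def MemL2 (w : ℝ → ℝ) (f : ℝ → ℂ) : Prop :=
  AEStronglyMeasurable f (volume.restrict (Set.Ici (0:ℝ))) ∧
  IntegrableOn (fun x => w x * ‖f x‖ ^ 2) (Set.Ici (0:ℝ)) volume

/-- the branch `p = √q` with positive real part (principal branch). -/
def sqrtQ (q : ℝ → ℂ) (x : ℝ) : ℂ := (q x) ^ ((1 : ℂ) / 2)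

/-- the a.e. derivative of `sqrtQ q`, where `q'` is the a.e. derivative of `q`. -/
def sqrtQD (q q' : ℝ → ℂ) (x : ℝ) : ℂ := q' x / (2 * sqrtQ q x)

/-- the weight `ρ = Re p - (1/2)|p'/p|`. -/
def rho (q q' : ℝ → ℂ) (x : ℝ) : ℝ :=
  (sqrtQ q x).re - (1 / 2) * ‖sqrtQD q q' x / sqrtQ q x‖

/-- Condition A for `q` on `[x₀,∞)` with constant `C`, where `q'` is the
a.e. derivative of `q`: `q ∈ L¹loc(ℝ₊)`, `q` is locally absolutely continuous
on `[x₀,∞)`, `q` takes values in a sector `Π_κ` on `[x₀,∞)`, the branch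
`p = √q` has positive real part there, and
`Re p ≥ C + (1/2)|p'/p|` a.e. on `[x₀,∞)`. -/
def CondA (q q' : ℝ → ℂ) (x₀ C : ℝ) : Prop :=
  LocallyIntegrableOn q (Set.Ici (0:ℝ)) volume ∧
  LocACOn q q' x₀ ∧
  (∃ κ, 0 ≤ κ ∧ ∀ x, x₀ ≤ x → q x ∈ PiSector κ) ∧
  (∀ x, x₀ ≤ x → 0 < (sqrtQ q x).re) ∧
  0 < C ∧
  ∀ᵐ x : ℝ, x₀ ≤ x → C + (1 / 2) * ‖sqrtQD q q' x / sqrtQ q x‖ ≤ (sqrtQ q x).re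

/-- The set `𝒩` of spectral parameters `lam` such that `q - lam` satisfies
condition A for `x ≥ x₁(lam)` for some `x₁(lam) ≥ 0` (note `(q - lam)' = q'`). -/
def NSet (q q' : ℝ → ℂ) : Set ℂ :=
  {lam : ℂ | ∃ x₁ C, 0 ≤ x₁ ∧ CondA (fun x => q x - lam) q' x₁ C}

/-! ### Calculus of locally absolutely continuous functions -/

/-- Absolute continuity passes to a function whose increments are dominated by those of an
absolutely continuous function. -/
lemma ac_of_dist_le {X Y : Type*} [PseudoMetricSpace X] [PseudoMetricSpace Y] {f : ℝ → X}
    {g : ℝ → Y} {a b K : ℝ} (hf : AbsolutelyContinuousOnInterval f a b)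
    (h : ∀ x ∈ Set.uIcc a b, ∀ y ∈ Set.uIcc a b, dist (g x) (g y) ≤ K * dist (f x) (f y)) :
    AbsolutelyContinuousOnInterval g a b := by
  unfold AbsolutelyContinuousOnInterval at hf ⊢
  have hf' := hf.const_mul K
  rw [mul_zero] at hf'
  refine squeeze_zero' ?_ ?_ hf'
  · exact Filter.Eventually.of_forall fun _ => Finset.sum_nonneg fun i _ => dist_nonneg
  rw [eventually_inf_principal]
  filter_upwards with (n, I) hnI
  simp only [Finset.mul_sum]
  refine Finset.sum_le_sum fun i hi => ?_
  exact h _ (hnI.1 i hi).1 _ (hnI.1 i hi).2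

/-- The indefinite integral of a complex-valued integrable function is absolutely continuous. -/
lemma ac_intervalIntegral {f : ℝ → ℂ} {a b : ℝ} (h : IntervalIntegrable f volume a b) :
    AbsolutelyContinuousOnInterval (fun x => ∫ v in a..x, f v) a b := by
  have hre : IntervalIntegrable (fun x => (f x).re) volume a b :=
    ⟨h.1.re, h.2.re⟩
  have him : IntervalIntegrable (fun x => (f x).im) volume a b :=
    ⟨h.1.im, h.2.im⟩
  have h1 := hre.absolutelyContinuousOnInterval_intervalIntegral (c := a) (by simp)
  have h2 := him.absolutelyContinuousOnInterval_intervalIntegral (c := a) (by simp)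
  have h1' : AbsolutelyContinuousOnInterval
      (fun x => ((∫ v in a..x, (f v).re : ℝ) : ℂ)) a b :=
    ac_of_dist_le (K := 1) h1 (fun x _ y _ => by
      rw [Complex.dist_eq, ← Complex.ofReal_sub, Complex.norm_real, one_mul]; rfl)
  have h2' : AbsolutelyContinuousOnInterval
      (fun x => I * ((∫ v in a..x, (f v).im : ℝ) : ℂ)) a b :=
    ac_of_dist_le (K := 1) h2 (fun x _ y _ => by
      rw [Complex.dist_eq, ← mul_sub, norm_mul, ← Complex.ofReal_sub, Complex.norm_real,
        Complex.norm_I, one_mul, one_mul]; rfl)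
  refine ac_of_dist_le (K := 1) (h1'.add h2') fun x hx y hy => ?_
  rw [one_mul]
  have key : ∀ x ∈ Set.uIcc a b, ∫ v in a..x, f v =
      ((∫ v in a..x, (f v).re : ℝ) : ℂ) + I * ((∫ v in a..x, (f v).im : ℝ) : ℂ) := by
    intro x hx
    have hx' : IntervalIntegrable f volume a x :=
      h.mono_set (Set.uIcc_subset_uIcc_left hx)
    rw [← intervalIntegral.integral_ofReal, ← intervalIntegral.integral_ofReal,
      ← intervalIntegral.integral_const_mul, ← intervalIntegral.integral_add]
    · refine intervalIntegral.integral_congr fun v _ => ?_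
      rw [mul_comm I, Complex.re_add_im]
    · exact ⟨hx'.1.re.ofReal, hx'.2.re.ofReal⟩
    · exact IntervalIntegrable.const_mul ⟨hx'.1.im.ofReal, hx'.2.im.ofReal⟩ _
  rw [key x hx, key y hy]
  rfl

namespace LocACOn

variable {f f' g g' : ℝ → ℂ} {a b : ℝ}

lemma intervalIntegrable (h : LocACOn f f' a) {s t : ℝ} (hs : a ≤ s) (ht : a ≤ t) :
    IntervalIntegrable f' volume s t :=
  (h.1 s hs).symm.trans (h.1 t ht)

lemma sub_eq (h : LocACOn f f' a) {s t : ℝ} (hs : a ≤ s) (ht : a ≤ t) :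
    f t - f s = ∫ x in s..t, f' x := by
  rw [h.2 t ht, h.2 s hs, ← intervalIntegral.integral_interval_sub_left (h.1 t ht) (h.1 s hs)]
  ring

lemma mono (h : LocACOn f f' a) (hab : a ≤ b) : LocACOn f f' b :=
  ⟨fun c hc => h.intervalIntegrable hab (hab.trans hc), fun x hx => by
    rw [← h.sub_eq hab (hab.trans hx)]; ring⟩

lemma ac (h : LocACOn f f' a) (hab : a ≤ b) : AbsolutelyContinuousOnInterval f a b := by
  refine ac_of_dist_le (K := 1) (ac_intervalIntegral (h.1 b hab)) fun x hx y hy => ?_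
  rw [Set.uIcc_of_le hab] at hx hy
  rw [h.2 x hx.1, h.2 y hy.1, dist_add_left, one_mul]

lemma continuousOn (h : LocACOn f f' a) : ContinuousOn f (Set.Ici a) := by
  intro x hx
  have hx' : a ≤ x := hx
  have h1 := (h.ac (b := x + 1) (by linarith)).continuousOn
  rw [Set.uIcc_of_le (by linarith)] at h1
  have h2 := h1 x ⟨hx', by linarith⟩
  refine h2.mono_of_mem_nhdsWithin ?_
  rw [← Set.Ici_inter_Iic]
  exact inter_mem_nhdsWithin _ (Iic_mem_nhds (by linarith))

lemma ae_hasDerivAt (h : LocACOn f f' a) : ∀ᵐ x : ℝ, a < x → HasDerivAt f (f' x) x := by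
  have h1 : ∀ n : ℕ, ∀ᵐ x : ℝ, x ∈ Set.Ioo a (a + n) → HasDerivAt f (f' x) x := by
    intro n
    have hn : a ≤ a + n := by simp
    filter_upwards [(h.1 (a + n) hn).ae_hasDerivAt_integral] with x hx hxI
    have h2 := hx (by rw [Set.uIcc_of_le hn]; exact ⟨hxI.1.le, hxI.2.le⟩) a (by simp)
    refine (h2.const_add (f a)).congr_of_eventuallyEq ?_
    filter_upwards [Ioi_mem_nhds hxI.1] with y hy
    exact h.2 y (le_of_lt hy)
  filter_upwards [ae_all_iff.2 h1] with x hx hax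
  obtain ⟨n, hn⟩ := exists_nat_gt (x - a)
  exact hx n ⟨hax, by linarith⟩

/-- The fundamental theorem of calculus, in the form of a criterion for `LocACOn`. -/
lemma of_ac (h : ∀ b, a ≤ b → AbsolutelyContinuousOnInterval f a b)
    (hi : ∀ b, a ≤ b → IntervalIntegrable f' volume a b)
    (hd : ∀ᵐ x : ℝ, a < x → HasDerivAt f (f' x) x) : LocACOn f f' a := by
  refine ⟨hi, fun x hx => ?_⟩
  have hac := (h x hx).sub (ac_intervalIntegral (hi x hx))
  obtain ⟨c, hc⟩ := hac.const_of_ae_hasDerivAt_zero (by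
    have hne : ∀ᵐ y : ℝ, y ≠ a := by simp [ae_iff, measure_singleton]
    filter_upwards [hd, (hi x hx).ae_hasDerivAt_integral, hne] with y h1 h2 h3 hy
    have h4 := h2 hy a (by simp)
    rw [Set.uIcc_of_le hx] at hy
    have := (h1 (lt_of_le_of_ne hy.1 h3.symm)).sub h4
    rwa [sub_self] at this)
  have e1 := hc a (by simp)
  have e2 := hc x (by simp)
  simp only [Pi.sub_apply, intervalIntegral.integral_same, sub_zero] at e1 e2
  rw [e1, ← e2]; ring

lemma congr_deriv (h : LocACOn f f' a) (he : ∀ x, a ≤ x → f' x = g' x) : LocACOn f g' a := by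
  refine ⟨fun b hb => (h.1 b hb).congr fun x hx => ?_, fun x hx => ?_⟩
  · rw [Set.uIoc_of_le hb] at hx
    exact he x hx.1.le
  · rw [h.2 x hx]
    congr 1
    refine intervalIntegral.integral_congr fun y hy => ?_
    rw [Set.uIcc_of_le hx] at hy
    exact he y hy.1

lemma congr_fun (h : LocACOn f f' a) (he : ∀ x, a ≤ x → f x = g x) : LocACOn g f' a :=
  ⟨h.1, fun x hx => by rw [← he x hx, ← he a le_rfl]; exact h.2 x hx⟩

lemma mul (hf : LocACOn f f' a) (hg : LocACOn g g' a) :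
    LocACOn (fun x => f x * g x) (fun x => f' x * g x + f x * g' x) a := by
  have hsub : ∀ b, a ≤ b → Set.uIcc a b ⊆ Set.Ici a := fun b hb => by
    rw [Set.uIcc_of_le hb]; exact fun x hx => hx.1
  refine of_ac (fun b hb => (hf.ac hb).smul (hg.ac hb)) (fun b hb => ?_) ?_
  · exact ((hf.1 b hb).mul_continuousOn (hg.continuousOn.mono (hsub b hb))).add
      ((hg.1 b hb).continuousOn_mul (hf.continuousOn.mono (hsub b hb)))
  · filter_upwards [hf.ae_hasDerivAt, hg.ae_hasDerivAt] with x h1 h2 hx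
    exact (h1 hx).mul (h2 hx)

lemma sub (hf : LocACOn f f' a) (hg : LocACOn g g' a) :
    LocACOn (fun x => f x - g x) (fun x => f' x - g' x) a := by
  refine ⟨fun b hb => (hf.1 b hb).sub (hg.1 b hb), fun x hx => ?_⟩
  beta_reduce
  rw [intervalIntegral.integral_sub (hf.1 x hx) (hg.1 x hx), hf.2 x hx, hg.2 x hx]
  ring

lemma add (hf : LocACOn f f' a) (hg : LocACOn g g' a) :
    LocACOn (fun x => f x + g x) (fun x => f' x + g' x) a := by
  refine ⟨fun b hb => (hf.1 b hb).add (hg.1 b hb), fun x hx => ?_⟩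
  beta_reduce
  rw [intervalIntegral.integral_add (hf.1 x hx) (hg.1 x hx), hf.2 x hx, hg.2 x hx]
  ring

lemma const_mul (hf : LocACOn f f' a) (c : ℂ) :
    LocACOn (fun x => c * f x) (fun x => c * f' x) a := by
  refine ⟨fun b hb => (hf.1 b hb).const_mul c, fun x hx => ?_⟩
  beta_reduce
  rw [intervalIntegral.integral_const_mul, hf.2 x hx]
  ring

lemma conj (hf : LocACOn f f' a) :
    LocACOn (fun x => (starRingEnd ℂ) (f x)) (fun x => (starRingEnd ℂ) (f' x)) a := by
  refine ⟨fun b hb => ?_, fun x hx => ?_⟩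
  · have h := hf.1 b hb
    exact ⟨Complex.conjCLE.toContinuousLinearMap.integrable_comp h.1,
      Complex.conjCLE.toContinuousLinearMap.integrable_comp h.2⟩
  · have h := Complex.conjCLE.toContinuousLinearMap.intervalIntegral_comp_comm (hf.1 x hx)
    simp only [ContinuousLinearEquiv.coe_coe, Complex.conjCLE_apply] at h
    beta_reduce
    rw [h, hf.2 x hx]
    simp

/-- A lower bound for the real part of the derivative integrates to a lower bound for the
increment of the real part. -/
lemma integral_le_re_sub (hf : LocACOn f f' a) {s t : ℝ} (hs : a ≤ s) (hst : s ≤ t) {h : ℝ → ℝ}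
    (hi : IntervalIntegrable h volume s t) (hle : ∀ᵐ x : ℝ, a < x → h x ≤ (f' x).re) :
    ∫ x in s..t, h x ≤ (f t).re - (f s).re := by
  have hI := hf.intervalIntegrable hs (hs.trans hst)
  have e : (f t).re - (f s).re = ∫ x in s..t, (f' x).re := by
    rw [← Complex.sub_re, hf.sub_eq hs (hs.trans hst)]
    have h := Complex.reCLM.intervalIntegral_comp_comm hI
    simp only [Complex.reCLM_apply] at h
    exact h.symm
  rw [e]
  refine intervalIntegral.integral_mono_ae_restrict hst hi ⟨hI.1.re, hI.2.re⟩ ?_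
  have hne : ∀ᵐ y : ℝ, y ≠ a := by simp [ae_iff, measure_singleton]
  filter_upwards [ae_restrict_of_ae hle, ae_restrict_mem measurableSet_Icc,
    ae_restrict_of_ae hne] with x hx hxI hxa
  exact hx (lt_of_le_of_ne (hs.trans hxI.1) hxa.symm)

end LocACOn
/-! ### Fundamental solutions and their dependence on the spectral parameter -/

/-- A dominated integral of functions holomorphic in a parameter is holomorphic in it. -/
lemma differentiableOn_intervalIntegral {U : Set ℂ} (hU : IsOpen U) {F : ℂ → ℝ → ℂ} {a b : ℝ}
    (hab : a ≤ b) {B : ℝ → ℝ} (hB : IntervalIntegrable B volume a b)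
    (hm : ∀ z ∈ U, AEStronglyMeasurable (F z) (volume.restrict (Set.Ioc a b)))
    (hle : ∀ z ∈ U, ∀ t ∈ Set.Ioc a b, ‖F z t‖ ≤ B t)
    (hd : ∀ t ∈ Set.Ioc a b, DifferentiableOn ℂ (fun z => F z t) U) :
    DifferentiableOn ℂ (fun z => ∫ t in a..b, F z t) U := by
  intro z₀ hz₀
  obtain ⟨R, hR, hRU⟩ := Metric.isOpen_iff.1 hU z₀ hz₀
  have hsub : ∀ z ∈ Metric.ball z₀ (R / 2), Metric.closedBall z (R / 4) ⊆ U := by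
    intro z hz w hw
    apply hRU
    rw [Metric.mem_ball] at hz ⊢
    rw [Metric.mem_closedBall] at hw
    linarith [dist_triangle w z z₀]
  have hmem : ∀ z ∈ Metric.ball z₀ (R / 2), z ∈ U := fun z hz =>
    hsub z hz (Metric.mem_closedBall_self (by positivity))
  have hzb : z₀ ∈ Metric.ball z₀ (R / 2) := Metric.mem_ball_self (by positivity)
  have hB' : IntegrableOn B (Set.Ioc a b) volume := hB.1
  have hda : ∀ t ∈ Set.Ioc a b, ∀ z ∈ Metric.ball z₀ (R / 2),
      HasDerivAt (fun z => F z t) (deriv (fun z => F z t) z) z := fun t ht z hz =>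
    ((hd t ht).differentiableAt (hU.mem_nhds (hmem z hz))).hasDerivAt
  simp only [intervalIntegral.integral_of_le hab]
  have key := hasDerivAt_integral_of_dominated_loc_of_deriv_le (𝕜 := ℂ)
    (μ := volume.restrict (Set.Ioc a b)) (F := F) (x₀ := z₀)
    (s := Metric.ball z₀ (R / 2)) (F' := fun z t => deriv (fun z => F z t) z)
    (bound := fun t => B t / (R / 4)) (Metric.ball_mem_nhds _ (by positivity)) ?_ ?_ ?_ ?_ ?_ ?_
  · exact key.2.differentiableAt.differentiableWithinAt
  · filter_upwards [hU.mem_nhds hz₀] with z hz using hm z hz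
  · refine hB'.mono' (hm z₀ hz₀) ?_
    filter_upwards [ae_restrict_mem measurableSet_Ioc] with t ht using hle z₀ hz₀ t ht
  · -- the derivative is the pointwise limit of difference quotients
    let h : ℕ → ℂ := fun n => ((R / 4 * (1 / ((n : ℝ) + 1)) : ℝ) : ℂ)
    have hpos : ∀ n : ℕ, 0 < R / 4 * (1 / ((n : ℝ) + 1)) := fun n => by positivity
    have hh0 : ∀ n, h n ≠ 0 := fun n => by
      simp only [h]; exact_mod_cast (hpos n).ne'
    have hlim : Tendsto h atTop (𝓝[≠] 0) := by
      refine tendsto_nhdsWithin_iff.2 ⟨?_, Filter.Eventually.of_forall hh0⟩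
      have h1 := (tendsto_one_div_add_atTop_nhds_zero_nat (𝕜 := ℝ)).const_mul (R / 4)
      rw [mul_zero] at h1
      exact (Complex.continuous_ofReal.tendsto 0).comp h1
    have hmemU : ∀ n, z₀ + h n ∈ U := by
      intro n
      apply hRU
      rw [Metric.mem_ball, dist_eq_norm, add_sub_cancel_left]
      simp only [h]
      rw [Complex.norm_real, Real.norm_of_nonneg (hpos n).le]
      have : 1 / ((n : ℝ) + 1) ≤ 1 := by
        rw [div_le_one (by positivity)]; linarith [n.cast_nonneg (α := ℝ)]
      nlinarith
    refine aestronglyMeasurable_of_tendsto_ae atTop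
      (f := fun n t => (h n)⁻¹ • (F (z₀ + h n) t - F z₀ t))
      (fun n => AEStronglyMeasurable.const_smul
        (f := fun t => F (z₀ + h n) t - F z₀ t) ((hm _ (hmemU n)).sub (hm _ hz₀)) ((h n)⁻¹)) ?_
    filter_upwards [ae_restrict_mem measurableSet_Ioc] with t ht
    exact (hasDerivAt_iff_tendsto_slope_zero.1 (hda t ht z₀ hzb)).comp hlim
  · filter_upwards [ae_restrict_mem measurableSet_Ioc] with t ht z hz
    refine Complex.norm_deriv_le_of_forall_mem_sphere_norm_le (by positivity) ?_ ?_
    · exact ((hd t ht).mono (hsub z hz)).diffContOnCl_ball subset_rfl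
    · exact fun w hw => hle w (hsub z hz (Metric.sphere_subset_closedBall hw)) t ht
  · exact hB'.div_const _
  · filter_upwards [ae_restrict_mem measurableSet_Ioc] with t ht using hda t ht

/-- Separate continuity in the parameter together with a locally uniform absolute continuity in
`x` gives joint continuity. -/
lemma continuousOn_joint {F f : ℂ → ℝ → ℂ} (hF : ∀ z, LocACOn (F z) (f z) 0)
    (hb : ∀ R X : ℝ, 0 ≤ X → ∃ B : ℝ → ℝ, IntervalIntegrable B volume 0 X ∧
      ∀ z, ‖z‖ < R → ∀ t, 0 ≤ t → t ≤ X → ‖f z t‖ ≤ B t)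
    (hc : ∀ x, 0 ≤ x → Continuous fun z => F z x) :
    ContinuousOn (fun p : ℝ × ℂ => F p.2 p.1) (Set.Ici (0 : ℝ) ×ˢ Set.univ) := by
  rintro ⟨x₀, z₀⟩ ⟨hx₀, -⟩
  have hx₀' : (0 : ℝ) ≤ x₀ := hx₀
  obtain ⟨B, hB, hle⟩ := hb (‖z₀‖ + 1) (x₀ + 1) (by linarith)
  have hG := intervalIntegral.continuousOn_primitive_interval (μ := volume) (f := B)
    (a := 0) (b := x₀ + 1) (by
      rw [Set.uIcc_of_le (by linarith), integrableOn_Icc_iff_integrableOn_Ioc]; exact hB.1)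
  rw [Set.uIcc_of_le (by linarith)] at hG
  have hGx := hG x₀ ⟨hx₀', by linarith⟩
  have hS : Set.Ici (0 : ℝ) ×ˢ (Set.univ : Set ℂ) ∈ 𝓝[Set.Ici (0 : ℝ) ×ˢ Set.univ] (x₀, z₀) :=
    self_mem_nhdsWithin
  have hnear : ∀ᶠ p : ℝ × ℂ in 𝓝[Set.Ici (0 : ℝ) ×ˢ Set.univ] (x₀, z₀),
      p.1 ∈ Set.Icc 0 (x₀ + 1) ∧ ‖p.2‖ < ‖z₀‖ + 1 := by
    have h1 : ∀ᶠ p : ℝ × ℂ in 𝓝 (x₀, z₀), p.1 < x₀ + 1 ∧ ‖p.2‖ < ‖z₀‖ + 1 :=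
      (IsOpen.inter (isOpen_lt continuous_fst continuous_const)
        (isOpen_lt continuous_snd.norm continuous_const)).mem_nhds
        ⟨by simp, by simp⟩
    filter_upwards [hS, mem_nhdsWithin_of_mem_nhds h1] with p hp h2
    exact ⟨⟨hp.1, h2.1.le⟩, h2.2⟩
  have hfst : Tendsto (fun p : ℝ × ℂ => p.1) (𝓝[Set.Ici (0 : ℝ) ×ˢ Set.univ] (x₀, z₀))
      (𝓝[Set.Icc 0 (x₀ + 1)] x₀) := by
    refine tendsto_nhdsWithin_iff.2 ⟨?_, hnear.mono fun p hp => hp.1⟩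
    exact (continuous_fst.tendsto (x₀, z₀)).mono_left nhdsWithin_le_nhds
  have hsnd : Tendsto (fun p : ℝ × ℂ => F p.2 x₀) (𝓝[Set.Ici (0 : ℝ) ×ˢ Set.univ] (x₀, z₀))
      (𝓝 (F z₀ x₀)) :=
    (((hc x₀ hx₀').comp continuous_snd).tendsto (x₀, z₀)).mono_left nhdsWithin_le_nhds
  have hdiff : Tendsto (fun p : ℝ × ℂ => F p.2 p.1 - F p.2 x₀)
      (𝓝[Set.Ici (0 : ℝ) ×ˢ Set.univ] (x₀, z₀)) (𝓝 0) := by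
    have hG0 := ((hGx.tendsto.comp hfst).sub_const (∫ t in (0 : ℝ)..x₀, B t)).abs
    rw [sub_self, abs_zero] at hG0
    refine squeeze_zero_norm' ?_ hG0
    filter_upwards [hnear] with p hp
    have hBi : ∀ s, s ∈ Set.Icc 0 (x₀ + 1) → IntervalIntegrable B volume 0 s := fun s hs =>
      hB.mono_set (by
        rw [Set.uIcc_of_le hs.1, Set.uIcc_of_le (by linarith)]
        exact Set.Icc_subset_Icc_right hs.2)
    have hx₀I : x₀ ∈ Set.Icc 0 (x₀ + 1) := ⟨hx₀', by linarith⟩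
    rw [(hF p.2).sub_eq hx₀' hp.1.1]
    simp only [Function.comp]
    rw [intervalIntegral.integral_interval_sub_left (hBi _ hp.1) (hBi _ hx₀I)]
    refine intervalIntegral.norm_integral_le_abs_of_norm_le ?_
      ((hBi _ hx₀I).symm.trans (hBi _ hp.1))
    filter_upwards [ae_restrict_mem measurableSet_uIoc] with t ht
    have ht' : t ∈ Set.Icc 0 (x₀ + 1) :=
      (Set.uIoc_subset_uIcc.trans (Set.uIcc_subset_Icc hx₀I hp.1)) ht
    exact hle _ hp.2 _ ht'.1 ht'.2
  have := hdiff.add hsnd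
  simp only [sub_add_cancel, zero_add] at this
  exact this

lemma integral_mul_primitive_pow {B : ℝ → ℝ} {x : ℝ}
    (hB : IntervalIntegrable B volume 0 x) (n : ℕ) :
    ∫ t in (0 : ℝ)..x, B t * (∫ s in (0 : ℝ)..t, B s) ^ n =
      (∫ s in (0 : ℝ)..x, B s) ^ (n + 1) / (n + 1) := by
  set A : ℝ → ℝ := fun t => ∫ s in (0 : ℝ)..t, B s with hA
  have hac : AbsolutelyContinuousOnInterval A 0 x :=
    hB.absolutelyContinuousOnInterval_intervalIntegral (c := 0) (by simp)
  have hacn : ∀ k : ℕ, AbsolutelyContinuousOnInterval (fun t => A t ^ (k + 1)) 0 x := by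
    intro k
    induction k with
    | zero => simpa using hac
    | succ k ih =>
      have := ih.mul hac
      exact this
  have h1 := (hacn n).integral_deriv_eq_sub
  have h2 : ∫ t in (0 : ℝ)..x, deriv (fun t => A t ^ (n + 1)) t =
      ∫ t in (0 : ℝ)..x, ((n : ℝ) + 1) * (B t * A t ^ n) := by
    refine intervalIntegral.integral_congr_ae ?_
    filter_upwards [hB.ae_hasDerivAt_integral] with t ht htI
    have h3 := (ht (Set.uIoc_subset_uIcc htI) 0 (by simp)).pow (n + 1)
    have h4 := h3.deriv
    rw [show (fun t => A t ^ (n + 1)) = (fun x => ∫ (t : ℝ) in (0 : ℝ)..x, B t) ^ (n + 1) from rfl,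
      h4]
    simp only [hA, Nat.add_sub_cancel, Nat.cast_add, Nat.cast_one]
    ring
  rw [h2, intervalIntegral.integral_const_mul] at h1
  have h5 : A 0 = 0 := by simp [hA]
  rw [h5, zero_pow (Nat.succ_ne_zero n), sub_zero] at h1
  rw [eq_div_iff (by positivity), mul_comm]
  exact h1

/-- Picard iterates of the first-order system `(y, y')' = (y', (q - lam) y)` with initial value
`c` at `0`; the solution is their sum. -/
def picard (q : ℝ → ℂ) (c : ℂ × ℂ) : ℕ → ℂ → ℝ → ℂ × ℂ
  | 0 => fun _ _ => c
  | n + 1 => fun lam x =>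
      (∫ t in (0 : ℝ)..x, (picard q c n lam t).2,
        ∫ t in (0 : ℝ)..x, (q t - lam) * (picard q c n lam t).1)

/-- The weight dominating the coefficients of the first-order system for `‖lam‖ ≤ R`. -/
def pB (q : ℝ → ℂ) (R : ℝ) (t : ℝ) : ℝ := 1 + ‖q t‖ + R

/-- The primitive of `pB`. -/
def pA (q : ℝ → ℂ) (R : ℝ) (x : ℝ) : ℝ := ∫ t in (0 : ℝ)..x, pB q R t

lemma pB_intervalIntegrable {q : ℝ → ℂ} (hq : ∀ b, 0 ≤ b → IntervalIntegrable q volume 0 b)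
    (R : ℝ) {x : ℝ} (hx : 0 ≤ x) : IntervalIntegrable (pB q R) volume 0 x :=
  ((intervalIntegrable_const (c := (1 : ℝ))).add (hq x hx).norm).add intervalIntegrable_const

lemma pA_nonneg (q : ℝ → ℂ) {R : ℝ} (hR : 0 ≤ R) {x : ℝ} (hx : 0 ≤ x) : 0 ≤ pA q R x :=
  intervalIntegral.integral_nonneg hx fun t _ => by
    unfold pB; have := norm_nonneg (q t); linarith

lemma pA_mono {q : ℝ → ℂ} (hq : ∀ b, 0 ≤ b → IntervalIntegrable q volume 0 b)
    {R : ℝ} (hR : 0 ≤ R) {x X : ℝ} (hx : 0 ≤ x) (hX : x ≤ X) : pA q R x ≤ pA q R X :=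
  intervalIntegral.integral_mono_interval le_rfl hx hX
    (Filter.Eventually.of_forall fun t => by
      simp only [Pi.zero_apply]; unfold pB; have := norm_nonneg (q t); linarith)
    (pB_intervalIntegrable hq R (hx.trans hX))

lemma continuousOn_primitive_Ici {f : ℝ → ℂ}
    (hf : ∀ b, 0 ≤ b → IntervalIntegrable f volume 0 b) :
    ContinuousOn (fun x => ∫ t in (0 : ℝ)..x, f t) (Set.Ici 0) := by
  have h : LocACOn (fun x => ∫ t in (0 : ℝ)..x, f t) f 0 := ⟨hf, fun x _ => by simp⟩
  exact h.continuousOn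

lemma sub_const_intervalIntegrable {q : ℝ → ℂ}
    (hq : ∀ b, 0 ≤ b → IntervalIntegrable q volume 0 b) (lam : ℂ) {b : ℝ} (hb : 0 ≤ b) :
    IntervalIntegrable (fun t => q t - lam) volume 0 b :=
  (hq b hb).sub intervalIntegrable_const

lemma picard_intervalIntegrable {q : ℝ → ℂ}
    (hq : ∀ b, 0 ≤ b → IntervalIntegrable q volume 0 b) {lam : ℂ} {u : ℝ → ℂ}
    (hu : ContinuousOn u (Set.Ici 0)) {b : ℝ} (hb : 0 ≤ b) :
    IntervalIntegrable u volume 0 b ∧ IntervalIntegrable (fun t => (q t - lam) * u t) volume 0 b := by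
  have hs : Set.uIcc 0 b ⊆ Set.Ici 0 := by rw [Set.uIcc_of_le hb]; exact fun x hx => hx.1
  exact ⟨(hu.mono hs).intervalIntegrable,
    (sub_const_intervalIntegrable hq lam hb).mul_continuousOn (hu.mono hs)⟩

lemma picard_continuousOn {q : ℝ → ℂ} (hq : ∀ b, 0 ≤ b → IntervalIntegrable q volume 0 b)
    (c : ℂ × ℂ) (n : ℕ) (lam : ℂ) :
    ContinuousOn (fun x => (picard q c n lam x).1) (Set.Ici 0) ∧
      ContinuousOn (fun x => (picard q c n lam x).2) (Set.Ici 0) := by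
  induction n with
  | zero => exact ⟨continuousOn_const (c := c.1), continuousOn_const (c := c.2)⟩
  | succ n ih =>
    exact ⟨continuousOn_primitive_Ici fun b hb =>
        (picard_intervalIntegrable hq (lam := lam) ih.2 hb).1,
      continuousOn_primitive_Ici fun b hb => (picard_intervalIntegrable hq ih.1 hb).2⟩

lemma picard_bound {q : ℝ → ℂ} (hq : ∀ b, 0 ≤ b → IntervalIntegrable q volume 0 b)
    (c : ℂ × ℂ) (n : ℕ) {R : ℝ} {lam : ℂ} (hl : ‖lam‖ ≤ R) {x : ℝ} (hx : 0 ≤ x) :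
    ‖picard q c n lam x‖ ≤ ‖c‖ * (pA q R x ^ n / n.factorial) := by
  have hR : 0 ≤ R := (norm_nonneg _).trans hl
  induction n generalizing x with
  | zero => simp [picard]
  | succ n ih =>
    have hB := pB_intervalIntegrable hq R hx
    have hAc : ContinuousOn (fun t => pA q R t) (Set.uIcc 0 x) :=
      (hB.absolutelyContinuousOnInterval_intervalIntegral (c := 0) (by simp)).continuousOn
    have hg : IntervalIntegrable
        (fun t => ‖c‖ / n.factorial * (pB q R t * pA q R t ^ n)) volume 0 x :=
      (hB.mul_continuousOn (hAc.pow n)).const_mul _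
    have hval : ∫ t in (0 : ℝ)..x, ‖c‖ / n.factorial * (pB q R t * pA q R t ^ n) =
        ‖c‖ * (pA q R x ^ (n + 1) / (n + 1).factorial) := by
      have := integral_mul_primitive_pow hB n
      rw [intervalIntegral.integral_const_mul]
      unfold pA
      rw [this, Nat.factorial_succ]
      push_cast
      field_simp
    have hnn : ∀ t, 0 ≤ t → 0 ≤ ‖c‖ * (pA q R t ^ n / n.factorial) := fun t ht => by
      have := pA_nonneg q hR ht
      positivity
    have key : ∀ (w : ℝ → ℂ) (u : ℝ → ℂ), (∀ t, 0 ≤ t → ‖w t‖ ≤ pB q R t) →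
        (∀ t, 0 ≤ t → ‖u t‖ ≤ ‖picard q c n lam t‖) →
        ‖∫ t in (0 : ℝ)..x, w t * u t‖ ≤ ‖c‖ * (pA q R x ^ (n + 1) / (n + 1).factorial) := by
      intro w u hw hu
      rw [← hval]
      refine intervalIntegral.norm_integral_le_of_norm_le hx ?_ hg
      refine Filter.Eventually.of_forall fun t ht => ?_
      rw [norm_mul]
      calc ‖w t‖ * ‖u t‖ ≤ pB q R t * (‖c‖ * (pA q R t ^ n / n.factorial)) :=
            mul_le_mul (hw t ht.1.le) ((hu t ht.1.le).trans (ih ht.1.le)) (norm_nonneg _)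
              ((norm_nonneg _).trans (hw t ht.1.le))
        _ = _ := by ring
    refine max_le ?_ ?_
    · have := key (fun _ => 1) (fun t => (picard q c n lam t).2)
        (fun t _ => by
          unfold pB; rw [norm_one]; have := norm_nonneg (q t); linarith)
        (fun t _ => norm_snd_le _)
      simp only [one_mul] at this
      exact this
    · exact key (fun t => q t - lam) (fun t => (picard q c n lam t).1)
        (fun t _ => by
          unfold pB; have := norm_sub_le (q t) lam; linarith)
        (fun t _ => norm_fst_le _)

lemma picard_bound' {q : ℝ → ℂ} (hq : ∀ b, 0 ≤ b → IntervalIntegrable q volume 0 b)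
    (c : ℂ × ℂ) (n : ℕ) {R : ℝ} {lam : ℂ} (hl : ‖lam‖ ≤ R) {x X : ℝ} (hx : 0 ≤ x) (hX : x ≤ X) :
    ‖picard q c n lam x‖ ≤ ‖c‖ * (pA q R X ^ n / n.factorial) := by
  have hR : 0 ≤ R := (norm_nonneg _).trans hl
  refine (picard_bound hq c n hl hx).trans ?_
  have := pA_nonneg q hR hx
  have := pA_mono hq hR hx hX
  gcongr

lemma picard_differentiable {q : ℝ → ℂ} (hq : ∀ b, 0 ≤ b → IntervalIntegrable q volume 0 b)
    (c : ℂ × ℂ) (n : ℕ) {x : ℝ} (hx : 0 ≤ x) :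
    Differentiable ℂ (fun lam => (picard q c n lam x).1) ∧
      Differentiable ℂ (fun lam => (picard q c n lam x).2) := by
  induction n generalizing x with
  | zero => exact ⟨differentiable_const c.1, differentiable_const c.2⟩
  | succ n ih =>
    have aux : ∀ F : ℂ → ℝ → ℂ, (∀ R : ℝ, 0 ≤ R → DifferentiableOn ℂ
        (fun lam => ∫ t in (0 : ℝ)..x, F lam t) (Metric.ball 0 R)) →
        Differentiable ℂ fun lam => ∫ t in (0 : ℝ)..x, F lam t := by
      intro F h lam
      refine (h (‖lam‖ + 1) (by positivity)).differentiableAt (Metric.isOpen_ball.mem_nhds ?_)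
      simp
    have hnb : ∀ {R : ℝ} {z : ℂ}, z ∈ Metric.ball (0 : ℂ) R → ‖z‖ ≤ R := fun h => by
      rw [mem_ball_zero_iff] at h; exact h.le
    refine ⟨aux _ fun R hR => ?_, aux _ fun R hR => ?_⟩
    · refine differentiableOn_intervalIntegral Metric.isOpen_ball hx
        (B := fun _ => ‖c‖ * (pA q R x ^ n / n.factorial)) intervalIntegrable_const ?_ ?_ ?_
      · intro z _
        exact (picard_intervalIntegrable hq (lam := z) (picard_continuousOn hq c n z).2
          hx).1.1.aestronglyMeasurable
      · intro z hz t ht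
        exact (norm_snd_le _).trans (picard_bound' hq c n (hnb hz) ht.1.le ht.2)
      · exact fun t ht => (ih ht.1.le).2.differentiableOn
    · refine differentiableOn_intervalIntegral Metric.isOpen_ball hx
        (B := fun t => pB q R t * (‖c‖ * (pA q R x ^ n / n.factorial)))
        ((pB_intervalIntegrable hq R hx).mul_const _) ?_ ?_ ?_
      · intro z _
        exact (picard_intervalIntegrable hq (lam := z) (picard_continuousOn hq c n z).1
          hx).2.1.aestronglyMeasurable
      · intro z hz t ht
        rw [norm_mul]
        refine mul_le_mul ?_ ((norm_fst_le _).trans (picard_bound' hq c n (hnb hz) ht.1.le ht.2))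
          (norm_nonneg _) ?_
        · unfold pB; have := norm_sub_le (q t) z; have := hnb hz; linarith
        · unfold pB; have := norm_nonneg (q t); linarith
      · intro t ht
        exact ((differentiable_const _).sub differentiable_id).differentiableOn.mul
          (ih ht.1.le).1.differentiableOn

lemma picard_summable (q : ℝ → ℂ) (c : ℂ × ℂ) (R X : ℝ) :
    Summable fun n : ℕ => ‖c‖ * (pA q R X ^ n / n.factorial) :=
  (Real.summable_pow_div_factorial (pA q R X)).mul_left _

/-- The initial value problem at `0` has a solution that is jointly continuous, and entire in the
spectral parameter. -/
theorem exists_fundamental {q : ℝ → ℂ} (hq : ∀ b, 0 ≤ b → IntervalIntegrable q volume 0 b)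
    (c : ℂ × ℂ) : ∃ y y' : ℂ → ℝ → ℂ,
      (∀ lam, IsSol (fun x => q x - lam) 0 (y lam) (y' lam) ∧ y lam 0 = c.1 ∧ y' lam 0 = c.2) ∧
      ContinuousOn (fun p : ℝ × ℂ => y p.2 p.1) (Set.Ici (0 : ℝ) ×ˢ Set.univ) ∧
      ContinuousOn (fun p : ℝ × ℂ => y' p.2 p.1) (Set.Ici (0 : ℝ) ×ˢ Set.univ) ∧
      (∀ x, 0 ≤ x → Differentiable ℂ fun lam => y lam x) ∧
      (∀ x, 0 ≤ x → Differentiable ℂ fun lam => y' lam x) := by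
  have hb1 : ∀ (n : ℕ) {R : ℝ} {lam : ℂ}, ‖lam‖ ≤ R → ∀ {x X : ℝ}, 0 ≤ x → x ≤ X →
      ‖(picard q c n lam x).1‖ ≤ ‖c‖ * (pA q R X ^ n / n.factorial) := fun n {R lam} hl {x X} hx hX =>
    (norm_fst_le _).trans (picard_bound' hq c n hl hx hX)
  have hb2 : ∀ (n : ℕ) {R : ℝ} {lam : ℂ}, ‖lam‖ ≤ R → ∀ {x X : ℝ}, 0 ≤ x → x ≤ X →
      ‖(picard q c n lam x).2‖ ≤ ‖c‖ * (pA q R X ^ n / n.factorial) := fun n {R lam} hl {x X} hx hX =>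
    (norm_snd_le _).trans (picard_bound' hq c n hl hx hX)
  set y : ℂ → ℝ → ℂ := fun lam x => ∑' n, (picard q c n lam x).1 with hy
  set y' : ℂ → ℝ → ℂ := fun lam x => ∑' n, (picard q c n lam x).2 with hy'
  have hs1 : ∀ lam x, 0 ≤ x → Summable fun n => (picard q c n lam x).1 := fun lam x hx =>
    Summable.of_norm_bounded (picard_summable q c ‖lam‖ x) fun n => hb1 n le_rfl hx le_rfl
  have hs2 : ∀ lam x, 0 ≤ x → Summable fun n => (picard q c n lam x).2 := fun lam x hx =>
    Summable.of_norm_bounded (picard_summable q c ‖lam‖ x) fun n => hb2 n le_rfl hx le_rfl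
  have hyb : ∀ {R : ℝ} {lam : ℂ}, ‖lam‖ ≤ R → ∀ {x X : ℝ}, 0 ≤ x → x ≤ X →
      ‖y lam x‖ ≤ ∑' n : ℕ, ‖c‖ * (pA q R X ^ n / n.factorial) := fun {R lam} hl {x X} hx hX =>
    tsum_of_norm_bounded (picard_summable q c R X).hasSum fun n => hb1 n hl hx hX
  have hyb' : ∀ {R : ℝ} {lam : ℂ}, ‖lam‖ ≤ R → ∀ {x X : ℝ}, 0 ≤ x → x ≤ X →
      ‖y' lam x‖ ≤ ∑' n : ℕ, ‖c‖ * (pA q R X ^ n / n.factorial) := fun {R lam} hl {x X} hx hX =>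
    tsum_of_norm_bounded (picard_summable q c R X).hasSum fun n => hb2 n hl hx hX
  have int1 : ∀ lam x, 0 ≤ x → y lam x = c.1 + ∫ t in (0 : ℝ)..x, y' lam t := by
    intro lam x hx
    have h := intervalIntegral.hasSum_integral_of_dominated_convergence (μ := volume) (a := 0)
      (b := x) (F := fun n t => (picard q c n lam t).2) (f := fun t => y' lam t)
      (fun n _ => ‖c‖ * (pA q ‖lam‖ x ^ n / n.factorial))
      (fun n => by
        rw [Set.uIoc_of_le hx]
        exact (picard_intervalIntegrable hq (lam := lam) (picard_continuousOn hq c n lam).2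
          hx).1.1.aestronglyMeasurable)
      (fun n => Filter.Eventually.of_forall fun t ht => by
        rw [Set.uIoc_of_le hx] at ht
        exact hb2 n le_rfl ht.1.le ht.2)
      (Filter.Eventually.of_forall fun t _ => picard_summable q c ‖lam‖ x)
      intervalIntegrable_const
      (Filter.Eventually.of_forall fun t ht => by
        rw [Set.uIoc_of_le hx] at ht
        exact (hs2 lam t ht.1.le).hasSum)
    simp only [hy]
    rw [(hs1 lam x hx).tsum_eq_zero_add, ← h.tsum_eq]
    rfl
  have int2 : ∀ lam x, 0 ≤ x → y' lam x = c.2 + ∫ t in (0 : ℝ)..x, (q t - lam) * y lam t := by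
    intro lam x hx
    have h := intervalIntegral.hasSum_integral_of_dominated_convergence (μ := volume) (a := 0)
      (b := x) (F := fun n t => (q t - lam) * (picard q c n lam t).1)
      (f := fun t => (q t - lam) * y lam t)
      (fun n t => ‖q t - lam‖ * (‖c‖ * (pA q ‖lam‖ x ^ n / n.factorial)))
      (fun n => by
        rw [Set.uIoc_of_le hx]
        exact (picard_intervalIntegrable hq (lam := lam) (picard_continuousOn hq c n lam).1
          hx).2.1.aestronglyMeasurable)
      (fun n => Filter.Eventually.of_forall fun t ht => by
        rw [Set.uIoc_of_le hx] at ht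
        rw [norm_mul]
        exact mul_le_mul_of_nonneg_left (hb1 n le_rfl ht.1.le ht.2) (norm_nonneg _))
      (Filter.Eventually.of_forall fun t _ => (picard_summable q c ‖lam‖ x).mul_left _)
      (by
        simp_rw [tsum_mul_left]
        exact (sub_const_intervalIntegrable hq lam hx).norm.mul_const _)
      (Filter.Eventually.of_forall fun t ht => by
        rw [Set.uIoc_of_le hx] at ht
        exact (hs1 lam t ht.1.le).hasSum.mul_left _)
    simp only [hy']
    rw [(hs2 lam x hx).tsum_eq_zero_add, ← h.tsum_eq]
    rfl
  have hloc : ∀ {X x : ℝ}, x < X → Set.Icc 0 X ∈ 𝓝[Set.Ici 0] x := fun {X x} h => by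
    have := inter_mem self_mem_nhdsWithin (mem_nhdsWithin_of_mem_nhds (Iic_mem_nhds h) : Set.Iic X ∈ 𝓝[Set.Ici (0 : ℝ)] x)
    exact this
  have hc1 : ∀ lam, ContinuousOn (y lam) (Set.Ici 0) := by
    intro lam x hx
    have := continuousOn_tsum (s := Set.Icc 0 (x + 1))
      (f := fun n t => (picard q c n lam t).1)
      (fun n => (picard_continuousOn hq c n lam).1.mono fun t ht => ht.1)
      (picard_summable q c ‖lam‖ (x + 1)) fun n t ht => hb1 n le_rfl ht.1 ht.2
    exact (this x ⟨hx, by linarith⟩).mono_of_mem_nhdsWithin (hloc (by linarith))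
  have hc2 : ∀ lam, ContinuousOn (y' lam) (Set.Ici 0) := by
    intro lam x hx
    have := continuousOn_tsum (s := Set.Icc 0 (x + 1))
      (f := fun n t => (picard q c n lam t).2)
      (fun n => (picard_continuousOn hq c n lam).2.mono fun t ht => ht.1)
      (picard_summable q c ‖lam‖ (x + 1)) fun n t ht => hb2 n le_rfl ht.1 ht.2
    exact (this x ⟨hx, by linarith⟩).mono_of_mem_nhdsWithin (hloc (by linarith))
  have h01 : ∀ lam, y lam 0 = c.1 := fun lam => by
    have := int1 lam 0 le_rfl
    rwa [intervalIntegral.integral_same, add_zero] at this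
  have h02 : ∀ lam, y' lam 0 = c.2 := fun lam => by
    have := int2 lam 0 le_rfl
    rwa [intervalIntegral.integral_same, add_zero] at this
  have hsol : ∀ lam, IsSol (fun x => q x - lam) 0 (y lam) (y' lam) := by
    intro lam
    refine ⟨⟨fun b hb => (picard_intervalIntegrable hq (lam := lam) (hc2 lam) hb).1,
      fun x hx => ?_⟩, ⟨fun b hb => ?_, fun x hx => ?_⟩⟩
    · rw [h01]; exact int1 lam x hx
    · simpa using (picard_intervalIntegrable hq (lam := lam) (hc1 lam) hb).2
    · rw [h02]; simpa using int2 lam x hx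
  have hd : ∀ (f : ℂ → ℂ), (∀ R : ℝ, 0 ≤ R → DifferentiableOn ℂ f (Metric.ball 0 R)) →
      Differentiable ℂ f := by
    intro f h lam
    refine (h (‖lam‖ + 1) (by positivity)).differentiableAt (Metric.isOpen_ball.mem_nhds ?_)
    simp
  have hnb : ∀ {R : ℝ} {z : ℂ}, z ∈ Metric.ball (0 : ℂ) R → ‖z‖ ≤ R := fun h => by
    rw [mem_ball_zero_iff] at h; exact h.le
  have hd1 : ∀ x, 0 ≤ x → Differentiable ℂ fun lam => y lam x := fun x hx => hd _ fun R _ =>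
    differentiableOn_tsum_of_summable_norm (picard_summable q c R x)
      (fun n => (picard_differentiable hq c n hx).1.differentiableOn) Metric.isOpen_ball
      fun n z hz => hb1 n (hnb hz) hx le_rfl
  have hd2 : ∀ x, 0 ≤ x → Differentiable ℂ fun lam => y' lam x := fun x hx => hd _ fun R _ =>
    differentiableOn_tsum_of_summable_norm (picard_summable q c R x)
      (fun n => (picard_differentiable hq c n hx).2.differentiableOn) Metric.isOpen_ball
      fun n z hz => hb2 n (hnb hz) hx le_rfl
  refine ⟨y, y', fun lam => ⟨hsol lam, h01 lam, h02 lam⟩, ?_, ?_, hd1, hd2⟩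
  · refine continuousOn_joint (fun z => (hsol z).1) (fun R X hX => ?_) fun x hx =>
      (hd1 x hx).continuous
    exact ⟨fun _ => ∑' n : ℕ, ‖c‖ * (pA q R X ^ n / n.factorial), intervalIntegrable_const,
      fun z hz t ht htX => hyb' hz.le ht htX⟩
  · refine continuousOn_joint (fun z => (hsol z).2) (fun R X hX => ?_) fun x hx =>
      (hd2 x hx).continuous
    refine ⟨fun t => pB q R t * ∑' n : ℕ, ‖c‖ * (pA q R X ^ n / n.factorial),
      (pB_intervalIntegrable hq R hX).mul_const _, fun z hz t ht htX => ?_⟩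
    simp only [Pi.zero_apply, sub_zero]
    rw [norm_mul]
    have hpB : ‖q t - z‖ ≤ pB q R t := by
      unfold pB; have := norm_sub_le (q t) z; linarith
    exact mul_le_mul hpB (hyb hz.le ht htX) (norm_nonneg _) ((norm_nonneg _).trans hpB)

/-! ### The Wronskian and the two-dimensional solution space -/

namespace IsSol

variable {V y y' z z' : ℝ → ℂ}

lemma deriv2 (h : IsSol V 0 y y') : LocACOn y' (fun x => V x * y x) 0 :=
  h.2.congr_deriv fun x _ => by simp

lemma of_deriv2 (h1 : LocACOn y y' 0) (h2 : LocACOn y' (fun x => V x * y x) 0) :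
    IsSol V 0 y y' :=
  ⟨h1, h2.congr_deriv fun x _ => by simp⟩

lemma comb (hy : IsSol V 0 y y') (hz : IsSol V 0 z z') (a b : ℂ) :
    IsSol V 0 (fun x => a * y x + b * z x) (fun x => a * y' x + b * z' x) :=
  of_deriv2 ((hy.1.const_mul a).add (hz.1.const_mul b))
    (((hy.deriv2.const_mul a).add (hz.deriv2.const_mul b)).congr_deriv fun x _ => by ring)

lemma wronskian (hy : IsSol V 0 y y') (hz : IsSol V 0 z z') {x : ℝ} (hx : 0 ≤ x) :
    y x * z' x - y' x * z x = y 0 * z' 0 - y' 0 * z 0 := by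
  have h := ((hy.1.mul hz.deriv2).sub (hy.deriv2.mul hz.1)).2 x hx
  beta_reduce at h
  rw [h, intervalIntegral.integral_congr (g := fun _ => (0 : ℂ)) fun t _ => by beta_reduce; ring]
  simp

end IsSol

/-- `θ, φ` is the system of solutions of `-y'' + V y = 0` normalised at `0`. -/
structure FundSys (V θ θ' φ φ' : ℝ → ℂ) : Prop where
  solθ : IsSol V 0 θ θ'
  solφ : IsSol V 0 φ φ'
  θ0 : θ 0 = 1
  θ0' : θ' 0 = 0
  φ0 : φ 0 = 0
  φ0' : φ' 0 = 1

namespace FundSys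

variable {V θ θ' φ φ' y y' : ℝ → ℂ}

lemma wr (h : FundSys V θ θ' φ φ') {x : ℝ} (hx : 0 ≤ x) : θ x * φ' x - θ' x * φ x = 1 := by
  rw [h.solθ.wronskian h.solφ hx, h.θ0, h.θ0', h.φ0, h.φ0']; ring

lemma repr (h : FundSys V θ θ' φ φ') (hy : IsSol V 0 y y') {x : ℝ} (hx : 0 ≤ x) :
    y x = y 0 * θ x + y' 0 * φ x ∧ y' x = y 0 * θ' x + y' 0 * φ' x := by
  have h1 := hy.wronskian h.solθ hx
  have h2 := hy.wronskian h.solφ hx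
  have h3 := h.wr hx
  rw [h.θ0, h.θ0'] at h1
  rw [h.φ0, h.φ0'] at h2
  constructor
  · linear_combination (-y x) * h3 - φ x * h1 + θ x * h2
  · linear_combination (-y' x) * h3 - φ' x * h1 + θ' x * h2

/-- The coefficients, with respect to a fundamental system, of the solution with values `a, b`
at `x₁`. -/
lemma data (h : FundSys V θ θ' φ φ') {x₁ : ℝ} (hx₁ : 0 ≤ x₁) (a b : ℂ) :
    ((a * φ' x₁ - b * φ x₁) * θ x₁ + (b * θ x₁ - a * θ' x₁) * φ x₁ = a) ∧
      ((a * φ' x₁ - b * φ x₁) * θ' x₁ + (b * θ x₁ - a * θ' x₁) * φ' x₁ = b) := by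
  have h3 := h.wr hx₁
  constructor
  · linear_combination a * h3
  · linear_combination b * h3

end FundSys

/-! ### Energy estimates -/

/-- The consequences of condition A used below, for a potential `W` on `[x₁, ∞)`: `p` is a square
root of `W` with `Re p ≥ C`, `r` is its reciprocal, and `τ` is the logarithmic derivative
`p' / p`. -/
structure EnergyData (W p r τ : ℝ → ℂ) (x₁ C : ℝ) : Prop where
  x₁_nonneg : 0 ≤ x₁
  C_pos : 0 < C
  sq : ∀ x, x₁ ≤ x → p x * p x = W x
  rp : ∀ x, x₁ ≤ x → r x * p x = 1
  re_p : ∀ x, x₁ ≤ x → C ≤ (p x).re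
  ac_r : LocACOn r (fun x => -(τ x) * r x) x₁
  ae_le : ∀ᵐ x : ℝ, x₁ < x → C + 1 / 2 * ‖τ x‖ ≤ (p x).re

lemma piSector_subset_slitPlane {κ : ℝ} (hκ : 0 ≤ κ) : PiSector κ ⊆ Complex.slitPlane := by
  intro z hz
  rw [Complex.mem_slitPlane_iff_arg]
  exact ⟨fun h => by have := hz.2.2; linarith, hz.1⟩

lemma exists_energyData {W q' : ℝ → ℂ} {x₁ C : ℝ} (hx₁ : 0 ≤ x₁) (h : CondA W q' x₁ C) :
    ∃ p r τ, EnergyData W p r τ x₁ C := by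
  obtain ⟨-, hW, ⟨κ, hκ, hsec⟩, hpos, hC, hae⟩ := h
  have hslit : ∀ x, x₁ ≤ x → W x ∈ Complex.slitPlane := fun x hx =>
    piSector_subset_slitPlane hκ (hsec x hx)
  set p := sqrtQ W with hp
  have hp0 : ∀ x, x₁ ≤ x → p x ≠ 0 := fun x hx h0 => by
    have := hpos x hx; rw [h0] at this; simp at this
  have hsq : ∀ x, x₁ ≤ x → p x * p x = W x := by
    intro x hx
    simp only [hp, sqrtQ]
    rw [← Complex.cpow_add _ _ (Complex.slitPlane_ne_zero (hslit x hx))]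
    norm_num
  have hpc : ContinuousOn p (Set.Ici x₁) :=
    hW.continuousOn.cpow_const fun x hx => hslit x hx
  have hre : ∀ x, x₁ ≤ x → C ≤ (p x).re := by
    intro x hx
    by_contra hlt
    have h1 : ContinuousOn (fun t => (p t).re) (Set.Ici x₁) :=
      Complex.continuous_re.comp_continuousOn hpc
    have h2 := (h1 x hx).eventually (gt_mem_nhds (not_le.1 hlt))
    obtain ⟨u, hu, hu2⟩ := mem_nhdsGE_iff_exists_Ico_subset.1
      (nhdsWithin_mono x (Set.Ici_subset_Ici.2 hx) h2)
    obtain ⟨y, hy, hyI⟩ := (Measure.dense_of_ae hae).exists_mem_open isOpen_Ioo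
      (Set.nonempty_Ioo.2 hu)
    have h3 : (p y).re < C := hu2 ⟨hyI.1.le, hyI.2⟩
    have h4 := hy (hx.trans hyI.1.le)
    have := norm_nonneg (sqrtQD W q' y / p y)
    linarith
  have hnp : ∀ x, x₁ ≤ x → C ≤ ‖p x‖ := fun x hx =>
    (hre x hx).trans ((le_abs_self _).trans (Complex.abs_re_le_norm _))
  set r : ℝ → ℂ := fun x => (p x)⁻¹ with hr
  have hrc : ContinuousOn r (Set.Ici x₁) := hpc.inv₀ fun x hx => hp0 x hx
  refine ⟨p, r, fun x => q' x * (r x ^ 2 / 2), hx₁, hC, hsq,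
    fun x hx => inv_mul_cancel₀ (hp0 x hx), hre, ?_, ?_⟩
  · refine LocACOn.of_ac (fun b hb => ?_) (fun b hb => ?_) ?_
    · -- `1/p(x) - 1/p(y) = (W(y) - W(x)) / (p(x) p(y) (p(x) + p(y)))`
      refine ac_of_dist_le (K := 1 / (2 * C ^ 3)) (hW.ac hb) fun x hx y hy => ?_
      rw [Set.uIcc_of_le hb] at hx hy
      have e : r x - r y = (W y - W x) * ((p x)⁻¹ * (p y)⁻¹ * (p x + p y)⁻¹) := by
        have h1 := hp0 x hx.1
        have h2 := hp0 y hy.1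
        have h3 : p x + p y ≠ 0 := fun h0 => by
          have h4 := congrArg Complex.re h0
          rw [Complex.add_re, Complex.zero_re] at h4
          linarith [hre x hx.1, hre y hy.1]
        simp only [hr]
        rw [← hsq x hx.1, ← hsq y hy.1]
        field_simp
        ring
      rw [dist_eq_norm, dist_comm (W x), dist_eq_norm, e, norm_mul, mul_comm]
      refine mul_le_mul_of_nonneg_right ?_ (norm_nonneg _)
      rw [norm_mul, norm_mul, norm_inv, norm_inv, norm_inv]
      have h1 := hnp x hx.1
      have h2 := hnp y hy.1
      have h3 : 2 * C ≤ ‖p x + p y‖ := by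
        refine le_trans ?_ (Complex.re_le_norm _)
        rw [Complex.add_re]; linarith [hre x hx.1, hre y hy.1]
      rw [← mul_inv, ← mul_inv, one_div]
      refine inv_anti₀ (by positivity) ?_
      calc 2 * C ^ 3 = C * C * (2 * C) := by ring
        _ ≤ _ := by gcongr
    · have hs : Set.uIcc x₁ b ⊆ Set.Ici x₁ := by rw [Set.uIcc_of_le hb]; exact fun x hx => hx.1
      have := (hW.1 b hb).mul_continuousOn (g := fun x => -(r x ^ 3 / 2))
        (((hrc.pow 3).div_const 2).neg.mono hs)
      refine this.congr fun x _ => ?_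
      ring
    · filter_upwards [hW.ae_hasDerivAt] with x hx hxl
      have h0 := hp0 x hxl.le
      have h1 : HasDerivAt p (1 / 2 * W x ^ ((1 : ℂ) / 2 - 1) * q' x) x :=
        ((hasStrictDerivAt_cpow_const (c := (1 : ℂ) / 2)
          (hslit x hxl.le)).hasDerivAt).comp x (hx hxl)
      have h2 := h1.inv h0
      refine h2.congr_deriv ?_
      have h3 : W x ^ ((1 : ℂ) / 2 - 1) = p x / (p x * p x) := by
        rw [Complex.cpow_sub _ _ (Complex.slitPlane_ne_zero (hslit x hxl.le)),
          Complex.cpow_one, hsq x hxl.le]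
        rfl
      rw [h3]
      simp only [hr]
      field_simp
  · filter_upwards [hae] with x hx hxl
    have h0 := hp0 x hxl.le
    have h1 := hx hxl.le
    have h2 : sqrtQD W q' x / p x = q' x * (r x ^ 2 / 2) := by
      simp only [hr, sqrtQD, ← hp]
      field_simp
    rwa [h2] at h1

namespace EnergyData

variable {W p r τ y y' z z' : ℝ → ℂ} {x₁ C : ℝ} {δ : ℂ}

lemma norm_p (h : EnergyData W p r τ x₁ C) {x : ℝ} (hx : x₁ ≤ x) : C ≤ ‖p x‖ :=
  (h.re_p x hx).trans (Complex.re_le_norm _)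

lemma norm_r_mul (h : EnergyData W p r τ x₁ C) {x : ℝ} (hx : x₁ ≤ x) : ‖r x‖ * ‖p x‖ = 1 := by
  rw [← norm_mul, h.rp x hx, norm_one]

lemma norm_r (h : EnergyData W p r τ x₁ C) {x : ℝ} (hx : x₁ ≤ x) : ‖r x‖ * C ≤ 1 := by
  rw [← h.norm_r_mul hx]
  exact mul_le_mul_of_nonneg_left (h.norm_p hx) (norm_nonneg _)

/-- The derivative of `w = y' / p` along solutions. -/
lemma ac_w (h : EnergyData W p r τ x₁ C) (hy : IsSol (fun x => W x - δ) 0 y y') :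
    LocACOn (fun x => r x * y' x)
      (fun x => (p x - δ * r x) * y x - τ x * (r x * y' x)) x₁ := by
  refine (h.ac_r.mul (hy.deriv2.mono h.x₁_nonneg)).congr_deriv fun x hx => ?_
  linear_combination (-r x * y x) * h.sq x hx + p x * y x * h.rp x hx

lemma ac_y (h : EnergyData W p r τ x₁ C) (hy : IsSol (fun x => W x - δ) 0 y y') :
    LocACOn y (fun x => p x * (r x * y' x)) x₁ :=
  (hy.1.mono h.x₁_nonneg).congr_deriv fun x hx => by
    linear_combination (-y' x) * h.rp x hx

end EnergyData

/-- The energy density `|y|² + |y'/p|²`. -/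
def nrg (r y y' : ℝ → ℂ) (x : ℝ) : ℝ := ‖y x‖ ^ 2 + ‖r x * y' x‖ ^ 2

/-- The energy form `Re ((y'/p) ȳ)`. -/
def egy (r y y' : ℝ → ℂ) (x : ℝ) : ℝ := (r x * y' x * (starRingEnd ℂ) (y x)).re

lemma two_egy_le (r y y' : ℝ → ℂ) (x : ℝ) : 2 * egy r y y' x ≤ nrg r y y' x := by
  have h1 : egy r y y' x ≤ ‖r x * y' x‖ * ‖y x‖ := by
    refine (Complex.re_le_norm _).trans ?_
    rw [norm_mul, Complex.norm_conj]
  unfold nrg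
  nlinarith [sq_nonneg (‖r x * y' x‖ - ‖y x‖)]

namespace EnergyData

variable {W p r τ y y' z z' : ℝ → ℂ} {x₁ C : ℝ} {δ : ℂ}

lemma continuousOn_nrg (h : EnergyData W p r τ x₁ C) (hy : IsSol (fun x => W x - δ) 0 y y') :
    ContinuousOn (nrg r y y') (Set.Ici x₁) :=
  ((h.ac_y hy).continuousOn.norm.pow 2).add ((h.ac_w hy).continuousOn.norm.pow 2)

lemma intervalIntegrable_nrg (h : EnergyData W p r τ x₁ C)
    (hy : IsSol (fun x => W x - δ) 0 y y') {s t : ℝ} (hs : x₁ ≤ s) (ht : x₁ ≤ t) :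
    IntervalIntegrable (nrg r y y') volume s t :=
  ((h.continuousOn_nrg hy).mono fun x hx => by
    rw [Set.mem_uIcc] at hx
    rcases hx with hx | hx
    · exact hs.trans hx.1
    · exact ht.trans hx.1).intervalIntegrable

/-- The energy form of a solution grows at least like the integral of the energy density. The
equation may be perturbed by a spectral shift `δ` with `|δ| ≤ C²/2`. -/
lemma energy (h : EnergyData W p r τ x₁ C) (hδ : ‖δ‖ ≤ C ^ 2 / 2)
    (hy : IsSol (fun x => W x - δ) 0 y y') {s t : ℝ} (hs : x₁ ≤ s) (hst : s ≤ t) :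
    C / 2 * (∫ x in s..t, nrg r y y' x) ≤ egy r y y' t - egy r y y' s := by
  have hQ := (h.ac_w hy).mul (h.ac_y hy).conj
  rw [← intervalIntegral.integral_const_mul]
  refine hQ.integral_le_re_sub hs hst
    ((h.intervalIntegrable_nrg hy hs (hs.trans hst)).const_mul _) ?_
  filter_upwards [h.ae_le] with x hx hxl
  have hx' := hx hxl
  have hC := h.C_pos
  set w := r x * y' x with hw
  have e : ((p x - δ * r x) * y x - τ x * w) * (starRingEnd ℂ) (y x) +
      w * (starRingEnd ℂ) (p x * w) =
      (p x * ((‖y x‖ ^ 2 : ℝ) : ℂ) + (starRingEnd ℂ) (p x) * ((‖w‖ ^ 2 : ℝ) : ℂ)) -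
        (δ * r x * y x * (starRingEnd ℂ) (y x) + τ x * w * (starRingEnd ℂ) (y x)) := by
    push_cast
    rw [← Complex.mul_conj' (y x), ← Complex.mul_conj' w, map_mul]
    ring
  rw [e, Complex.sub_re, Complex.add_re, Complex.re_mul_ofReal, Complex.re_mul_ofReal,
    Complex.conj_re]
  have h1 : (δ * r x * y x * (starRingEnd ℂ) (y x) + τ x * w * (starRingEnd ℂ) (y x)).re ≤
      ‖δ‖ * ‖r x‖ * ‖y x‖ ^ 2 + ‖τ x‖ * ‖w‖ * ‖y x‖ := by
    refine (Complex.re_le_norm _).trans ((norm_add_le _ _).trans (le_of_eq ?_))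
    simp only [norm_mul, Complex.norm_conj]
    ring
  have h2 : ‖δ‖ * ‖r x‖ ≤ C / 2 := by
    have h3 := h.norm_r hxl.le
    have h4 : ‖δ‖ * ‖r x‖ ≤ C ^ 2 / 2 * ‖r x‖ :=
      mul_le_mul_of_nonneg_right hδ (norm_nonneg _)
    nlinarith
  have h3 : ‖τ x‖ * ‖w‖ * ‖y x‖ ≤ ‖τ x‖ / 2 * (‖y x‖ ^ 2 + ‖w‖ ^ 2) := by
    nlinarith [mul_nonneg (norm_nonneg (τ x)) (sq_nonneg (‖w‖ - ‖y x‖))]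
  have h4 : ‖δ‖ * ‖r x‖ * ‖y x‖ ^ 2 ≤ C / 2 * (‖y x‖ ^ 2 + ‖w‖ ^ 2) :=
    mul_le_mul h2 (by nlinarith [sq_nonneg ‖w‖]) (by positivity) (by positivity)
  have h5 : (C + 1 / 2 * ‖τ x‖) * (‖y x‖ ^ 2 + ‖w‖ ^ 2) ≤
      (p x).re * (‖y x‖ ^ 2 + ‖w‖ ^ 2) := mul_le_mul_of_nonneg_right hx' (by positivity)
  change C / 2 * (‖y x‖ ^ 2 + ‖w‖ ^ 2) ≤ _
  linarith

lemma egy_mono (h : EnergyData W p r τ x₁ C) (hδ : ‖δ‖ ≤ C ^ 2 / 2)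
    (hy : IsSol (fun x => W x - δ) 0 y y') {s t : ℝ} (hs : x₁ ≤ s) (hst : s ≤ t) :
    egy r y y' s ≤ egy r y y' t := by
  have h1 := h.energy hδ hy hs hst
  have h2 : 0 ≤ ∫ x in s..t, nrg r y y' x :=
    intervalIntegral.integral_nonneg hst fun x _ => by unfold nrg; positivity
  have := mul_nonneg (half_pos h.C_pos).le h2
  linarith

/-- For a square integrable solution the derivative term `y'/p` is square integrable too, and so
the energy form, being increasing, cannot take positive values. -/
lemma egy_nonpos (h : EnergyData W p r τ x₁ C) (hy : IsSol (fun x => W x - 0) 0 y y') {I : ℝ}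
    (hI : ∀ T, x₁ ≤ T → ∫ x in x₁..T, ‖y x‖ ^ 2 ≤ I) {x : ℝ} (hx : x₁ ≤ x) :
    egy r y y' x ≤ 0 := by
  have hC := h.C_pos
  have hyc := (h.ac_y hy).continuousOn
  have hwc := (h.ac_w hy).continuousOn
  have hii : ∀ {f : ℝ → ℝ}, ContinuousOn f (Set.Ici x₁) → ∀ {s t}, x₁ ≤ s → s ≤ t →
      IntervalIntegrable f volume s t := by
    intro f hf s t hs hst
    exact (hf.mono fun x hx => by rw [Set.uIcc_of_le hst] at hx; exact hs.trans hx.1).intervalIntegrable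
  have hy2 : ContinuousOn (fun x => ‖y x‖ ^ 2) (Set.Ici x₁) := hyc.norm.pow 2
  have hw2 : ContinuousOn (fun x => ‖r x * y' x‖ ^ 2) (Set.Ici x₁) := hwc.norm.pow 2
  -- a lower bound for `|y|²` or for the energy density contradicts its integrability
  have hbig : ∀ {f : ℝ → ℝ} {s a J : ℝ}, ContinuousOn f (Set.Ici x₁) → (∀ x, x₁ ≤ x → 0 ≤ f x) →
      x₁ ≤ s → 0 < a → (∀ x, s ≤ x → a ≤ f x) → ¬ ∀ T, x₁ ≤ T → ∫ x in x₁..T, f x ≤ J := by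
    intro f s a J hf hf0 hs ha hle hall
    have hT : s ≤ s + (|J| + 1) / a := by
      have : 0 ≤ (|J| + 1) / a := by positivity
      linarith
    have h1 := hall _ (hs.trans hT)
    have h2 : ∫ x in s..(s + (|J| + 1) / a), a ≤ ∫ x in s..(s + (|J| + 1) / a), f x :=
      intervalIntegral.integral_mono_on hT intervalIntegrable_const (hii hf hs hT)
        fun x hx => hle x hx.1
    have h3 := intervalIntegral.integral_add_adjacent_intervals (hii hf le_rfl hs) (hii hf hs hT)
    have h4 : 0 ≤ ∫ x in x₁..s, f x :=
      intervalIntegral.integral_nonneg hs fun x hx => hf0 x hx.1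
    rw [intervalIntegral.integral_const, add_sub_cancel_left, smul_eq_mul,
      div_mul_cancel₀ _ ha.ne'] at h2
    have := le_abs_self J
    linarith
  -- the auxiliary form `F = Re (w ȳ r̄)`
  set Fc : ℝ → ℂ := fun x => r x * y' x * (starRingEnd ℂ) (y x) * (starRingEnd ℂ) (r x) with hFc
  have hFac := ((h.ac_w hy).mul (h.ac_y hy).conj).mul h.ac_r.conj
  have hF : ∀ t, x₁ ≤ t →
      ∫ x in x₁..t, (1 / 2 * ‖r x * y' x‖ ^ 2 - 9 * ‖y x‖ ^ 2) ≤ (Fc t).re - (Fc x₁).re := by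
    intro t ht
    refine hFac.integral_le_re_sub le_rfl ht
      (((hii hw2 le_rfl ht).const_mul _).sub ((hii hy2 le_rfl ht).const_mul _)) ?_
    filter_upwards [h.ae_le] with x hx hxl
    have hx' := hx hxl
    have hrp : (starRingEnd ℂ) (p x) * (starRingEnd ℂ) (r x) = 1 := by
      rw [← map_mul, mul_comm, h.rp x hxl.le, map_one]
    set w := r x * y' x with hw
    have e : (((p x - 0 * r x) * y x - τ x * w) * (starRingEnd ℂ) (y x) +
        w * (starRingEnd ℂ) (p x * w)) * (starRingEnd ℂ) (r x) +
        w * (starRingEnd ℂ) (y x) * (starRingEnd ℂ) (-(τ x) * r x) =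
        ((‖w‖ ^ 2 : ℝ) : ℂ) - (-(p x * (starRingEnd ℂ) (r x) * (y x * (starRingEnd ℂ) (y x))) +
          (τ x * (starRingEnd ℂ) (r x) * w * (starRingEnd ℂ) (y x) +
          (starRingEnd ℂ) (τ x) * (starRingEnd ℂ) (r x) * w * (starRingEnd ℂ) (y x))) := by
      push_cast
      rw [← Complex.mul_conj' w, map_mul _ (p x) w, map_mul _ (-(τ x)) (r x), map_neg]
      linear_combination w * (starRingEnd ℂ) w * hrp
    rw [e, Complex.sub_re, Complex.ofReal_re]
    have hτr : ‖τ x‖ * ‖r x‖ ≤ 2 := by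
      have h1 : ‖τ x‖ ≤ 2 * ‖p x‖ := by
        have := Complex.re_le_norm (p x)
        linarith
      have h2 := h.norm_r_mul hxl.le
      nlinarith [mul_le_mul_of_nonneg_right h1 (norm_nonneg (r x))]
    have h1 : (-(p x * (starRingEnd ℂ) (r x) * (y x * (starRingEnd ℂ) (y x))) +
          (τ x * (starRingEnd ℂ) (r x) * w * (starRingEnd ℂ) (y x) +
          (starRingEnd ℂ) (τ x) * (starRingEnd ℂ) (r x) * w * (starRingEnd ℂ) (y x))).re ≤
        ‖r x‖ * ‖p x‖ * ‖y x‖ ^ 2 + 2 * (‖τ x‖ * ‖r x‖) * (‖w‖ * ‖y x‖) := by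
      refine (Complex.re_le_norm _).trans ((norm_add_le _ _).trans
        ((add_le_add_right (norm_add_le _ _) _).trans (le_of_eq ?_)))
      simp only [norm_mul, norm_neg, Complex.norm_conj]
      ring
    have h2 : (‖τ x‖ * ‖r x‖) * (‖w‖ * ‖y x‖) ≤ 2 * (‖w‖ * ‖y x‖) :=
      mul_le_mul_of_nonneg_right hτr (by positivity)
    rw [h.norm_r_mul hxl.le] at h1
    nlinarith [sq_nonneg (‖w‖ - 4 * ‖y x‖)]
  -- `F ≤ 1` at arbitrarily large arguments, because `(|y|²)' = 2 |p|² F`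
  have hfreq : ∀ X, x₁ ≤ X → ∃ t, X ≤ t ∧ (Fc t).re ≤ 1 := by
    intro X hX
    by_contra! hcon
    refine hbig hy2 (fun x _ => by positivity) (s := X + 1) (a := 2 * C ^ 2) (J := I)
      (by linarith) (by positivity) ?_ hI
    intro t ht
    have hYY := (h.ac_y hy).mul (h.ac_y hy).conj
    have h1 : ∫ x in X..t, 2 * C ^ 2 ≤ _ := ((hYY.mono hX).integral_le_re_sub le_rfl
      (by linarith) (h := fun _ => 2 * C ^ 2) intervalIntegrable_const
      (Filter.Eventually.of_forall fun x hx => by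
        have hx1 : x₁ ≤ x := hX.trans hx.le
        have h2 := hcon x hx.le
        have h3 : p x = ((‖p x‖ ^ 2 : ℝ) : ℂ) * (starRingEnd ℂ) (r x) := by
          push_cast
          rw [← Complex.mul_conj', mul_assoc, ← map_mul, mul_comm (p x) (r x), h.rp x hx1,
            map_one, mul_one]
        have h4 : p x * (r x * y' x) * (starRingEnd ℂ) (y x) +
            y x * (starRingEnd ℂ) (p x * (r x * y' x)) =
            ((‖p x‖ ^ 2 : ℝ) : ℂ) * Fc x +
              (starRingEnd ℂ) (((‖p x‖ ^ 2 : ℝ) : ℂ) * Fc x) := by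
          have h5 : p x * (r x * y' x) * (starRingEnd ℂ) (y x) = ((‖p x‖ ^ 2 : ℝ) : ℂ) * Fc x := by
            nth_rw 1 [h3]
            simp only [hFc]
            ring
          rw [← h5]
          simp only [map_mul, Complex.conj_conj]
          ring
        rw [h4, Complex.add_re, Complex.conj_re, Complex.re_ofReal_mul]
        have h6 : C ^ 2 ≤ ‖p x‖ ^ 2 := pow_le_pow_left₀ hC.le (h.norm_p hx1) 2
        have h7 : C ^ 2 * 1 ≤ ‖p x‖ ^ 2 * (Fc x).re := mul_le_mul h6 h2.le zero_le_one (by positivity)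
        linarith))
    rw [intervalIntegral.integral_const, smul_eq_mul] at h1
    rw [Complex.mul_conj', Complex.mul_conj'] at h1
    norm_cast at h1
    have h8 : 1 * (2 * C ^ 2) ≤ (t - X) * (2 * C ^ 2) :=
      mul_le_mul_of_nonneg_right (by linarith) (by positivity)
    have := sq_nonneg ‖y X‖
    linarith
  -- hence `w` is square integrable
  have hW : ∀ T, x₁ ≤ T →
      ∫ x in x₁..T, ‖r x * y' x‖ ^ 2 ≤ 2 * (9 * I + (1 - (Fc x₁).re)) := by
    intro T hT
    obtain ⟨t, hTt, ht⟩ := hfreq T hT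
    have hxt := hT.trans hTt
    have h1 := hF t hxt
    rw [intervalIntegral.integral_sub ((hii hw2 le_rfl hxt).const_mul _)
      ((hii hy2 le_rfl hxt).const_mul _), intervalIntegral.integral_const_mul,
      intervalIntegral.integral_const_mul] at h1
    have h2 := hI t hxt
    have h3 : ∫ x in x₁..T, ‖r x * y' x‖ ^ 2 ≤ ∫ x in x₁..t, ‖r x * y' x‖ ^ 2 :=
      intervalIntegral.integral_mono_interval le_rfl hT hTt
        (Filter.Eventually.of_forall fun x => by positivity) (hii hw2 le_rfl hxt)
    linarith
  by_contra! hpos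
  refine hbig (h.continuousOn_nrg hy) (fun t _ => by unfold nrg; positivity) (s := x)
    (a := 2 * egy r y y' x) (J := I + 2 * (9 * I + (1 - (Fc x₁).re))) hx (by positivity) ?_ ?_
  · intro t ht
    have h1 := h.egy_mono (by rw [norm_zero]; positivity) hy hx ht
    exact le_trans (by linarith) (two_egy_le r y y' t)
  · intro T hT
    unfold nrg
    rw [intervalIntegral.integral_add (hii hy2 le_rfl hT) (hii hw2 le_rfl hT)]
    exact add_le_add (hI T hT) (hW T hT)

end EnergyData

/-! ### Uniqueness of the square integrable solution -/

/-- Square integrability on `ℝ₊`, phrased through bounded partial integrals. -/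
def L2B (y : ℝ → ℂ) : Prop := ∃ I : ℝ, ∀ T, 0 ≤ T → ∫ x in (0 : ℝ)..T, ‖y x‖ ^ 2 ≤ I

lemma intervalIntegrable_normSq {y : ℝ → ℂ} (hy : ContinuousOn y (Set.Ici 0)) {s t : ℝ}
    (hs : 0 ≤ s) (ht : 0 ≤ t) : IntervalIntegrable (fun x => ‖y x‖ ^ 2) volume s t :=
  ((hy.norm.pow 2).mono fun x hx => by
    rw [Set.mem_uIcc] at hx
    rcases hx with hx | hx
    · exact hs.trans hx.1
    · exact ht.trans hx.1).intervalIntegrable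

lemma L2B.tail {y : ℝ → ℂ} (hy : ContinuousOn y (Set.Ici 0)) (h : L2B y) {x₁ : ℝ} (hx₁ : 0 ≤ x₁) :
    ∃ I : ℝ, ∀ T, x₁ ≤ T → ∫ x in x₁..T, ‖y x‖ ^ 2 ≤ I := by
  obtain ⟨I, hI⟩ := h
  refine ⟨I, fun T hT => le_trans ?_ (hI T (hx₁.trans hT))⟩
  exact intervalIntegral.integral_mono_interval hx₁ hT le_rfl
    (Filter.Eventually.of_forall fun x => by positivity)
    (intervalIntegrable_normSq hy le_rfl (hx₁.trans hT))

lemma L2B.of_tail {y : ℝ → ℂ} (hy : ContinuousOn y (Set.Ici 0)) {x₁ I : ℝ} (hx₁ : 0 ≤ x₁)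
    (h : ∀ T, x₁ ≤ T → ∫ x in x₁..T, ‖y x‖ ^ 2 ≤ I) : L2B y := by
  refine ⟨(∫ x in (0 : ℝ)..x₁, ‖y x‖ ^ 2) + I, fun T hT => ?_⟩
  have hm : x₁ ≤ max x₁ T := le_max_left _ _
  calc ∫ x in (0 : ℝ)..T, ‖y x‖ ^ 2 ≤ ∫ x in (0 : ℝ)..max x₁ T, ‖y x‖ ^ 2 :=
        intervalIntegral.integral_mono_interval le_rfl hT (le_max_right _ _)
          (Filter.Eventually.of_forall fun x => by positivity)
          (intervalIntegrable_normSq hy le_rfl (hx₁.trans hm))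
    _ = (∫ x in (0 : ℝ)..x₁, ‖y x‖ ^ 2) + ∫ x in x₁..max x₁ T, ‖y x‖ ^ 2 :=
        (intervalIntegral.integral_add_adjacent_intervals
          (intervalIntegrable_normSq hy le_rfl hx₁)
          (intervalIntegrable_normSq hy hx₁ (hx₁.trans hm))).symm
    _ ≤ _ := by gcongr; exact h _ hm

lemma L2B.comb {y z : ℝ → ℂ} (hyc : ContinuousOn y (Set.Ici 0)) (hzc : ContinuousOn z (Set.Ici 0))
    (hy : L2B y) (hz : L2B z) (a b : ℂ) : L2B fun x => a * y x + b * z x := by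
  obtain ⟨I, hI⟩ := hy
  obtain ⟨J, hJ⟩ := hz
  refine ⟨2 * ‖a‖ ^ 2 * I + 2 * ‖b‖ ^ 2 * J, fun T hT => ?_⟩
  have h1 : ∫ x in (0 : ℝ)..T, ‖a * y x + b * z x‖ ^ 2 ≤
      ∫ x in (0 : ℝ)..T, (2 * ‖a‖ ^ 2 * ‖y x‖ ^ 2 + 2 * ‖b‖ ^ 2 * ‖z x‖ ^ 2) := by
    refine intervalIntegral.integral_mono_on hT
      (intervalIntegrable_normSq ((continuousOn_const.mul hyc).add (continuousOn_const.mul hzc))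
        le_rfl hT)
      (((intervalIntegrable_normSq hyc le_rfl hT).const_mul _).add
        ((intervalIntegrable_normSq hzc le_rfl hT).const_mul _)) fun x _ => ?_
    have h2 := norm_add_le (a * y x) (b * z x)
    rw [norm_mul, norm_mul] at h2
    nlinarith [sq_nonneg (‖a‖ * ‖y x‖ - ‖b‖ * ‖z x‖), norm_nonneg (a * y x + b * z x)]
  rw [intervalIntegral.integral_add ((intervalIntegrable_normSq hyc le_rfl hT).const_mul _)
    ((intervalIntegrable_normSq hzc le_rfl hT).const_mul _),
    intervalIntegral.integral_const_mul, intervalIntegral.integral_const_mul] at h1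
  refine h1.trans (add_le_add ?_ ?_)
  · exact mul_le_mul_of_nonneg_left (hI T hT) (by positivity)
  · exact mul_le_mul_of_nonneg_left (hJ T hT) (by positivity)

lemma memL2_iff_L2B {y : ℝ → ℂ} (hy : ContinuousOn y (Set.Ici 0)) :
    MemL2 (fun _ => 1) y ↔ L2B y := by
  constructor
  · rintro ⟨-, h⟩
    simp only [one_mul] at h
    refine ⟨∫ x in Set.Ici (0 : ℝ), ‖y x‖ ^ 2, fun T hT => ?_⟩
    rw [intervalIntegral.integral_of_le hT]
    exact setIntegral_mono_set h (Filter.Eventually.of_forall fun x => by positivity)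
      (Filter.Eventually.of_forall fun x hx => hx.1.le)
  · rintro ⟨I, hI⟩
    refine ⟨hy.aestronglyMeasurable measurableSet_Ici, ?_⟩
    simp only [one_mul]
    rw [integrableOn_Ici_iff_integrableOn_Ioi]
    refine integrableOn_Ioi_of_intervalIntegral_norm_bounded (l := atTop) (b := fun T : ℝ => T) I 0
      (fun T => ?_) tendsto_id ?_
    · rcases le_total 0 T with hT | hT
      · exact (intervalIntegrable_normSq hy le_rfl hT).1
      · simp [Set.Ioc_eq_empty (not_lt.2 hT)]
    · filter_upwards [eventually_ge_atTop 0] with T hT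
      simpa using hI T hT

namespace EnergyData

variable {W p r τ y y' z z' : ℝ → ℂ} {x₁ C : ℝ} {δ : ℂ}

/-- Two square integrable solutions are linearly dependent: otherwise every solution would be
square integrable, including the one with `y = y'/p = 1` at `x₁`, whose energy form is positive. -/
lemma wronskian_eq_zero (h : EnergyData W p r τ x₁ C) (hy : IsSol (fun x => W x - 0) 0 y y')
    (hz : IsSol (fun x => W x - 0) 0 z z') (hy2 : L2B y) (hz2 : L2B z) :
    y 0 * z' 0 - y' 0 * z 0 = 0 := by
  by_contra hne
  have hx := h.x₁_nonneg
  have hw := hy.wronskian hz hx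
  set ω := y 0 * z' 0 - y' 0 * z 0 with hω
  set a := (z' x₁ - p x₁ * z x₁) / ω with ha
  set b := (y x₁ * p x₁ - y' x₁) / ω with hb
  have hc := hy.comb hz a b
  obtain ⟨I, hI⟩ := (hy2.comb hy.1.continuousOn hz.1.continuousOn hz2 a b).tail hc.1.continuousOn hx
  have h1 := h.egy_nonpos hc hI le_rfl
  have e1 : a * y x₁ + b * z x₁ = 1 := by
    simp only [ha, hb]
    field_simp
    linear_combination hw
  have e2 : a * y' x₁ + b * z' x₁ = p x₁ := by
    simp only [ha, hb]
    field_simp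
    linear_combination p x₁ * hw
  unfold egy at h1
  beta_reduce at h1
  rw [e1, e2, h.rp x₁ le_rfl] at h1
  simp at h1
  linarith

end EnergyData

/-- Uniqueness of the square integrable solution up to a factor, for `lam ∈ 𝒩`. -/
theorem wronskian_eq_zero_of_mem_NSet {q q' : ℝ → ℂ} {lam : ℂ} (hl : lam ∈ NSet q q')
    {y y' z z' : ℝ → ℂ} (hy : IsSol (fun x => q x - lam) 0 y y')
    (hz : IsSol (fun x => q x - lam) 0 z z') (hy2 : L2B y) (hz2 : L2B z) :
    y 0 * z' 0 - y' 0 * z 0 = 0 := by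
  obtain ⟨x₁, C, hx₁, hA⟩ := hl
  obtain ⟨p, r, τ, h⟩ := exists_energyData hx₁ hA
  exact h.wronskian_eq_zero (by simpa using hy) (by simpa using hz) hy2 hz2

/-! ### Local holomorphic families of square integrable solutions -/

namespace EnergyData

variable {W p r τ u u' v v' : ℝ → ℂ} {x₁ C : ℝ} {δ : ℂ}

lemma egy_data (h : EnergyData W p r τ x₁ C) (hu : u x₁ = 1) (hu' : u' x₁ = p x₁)
    (hv : v x₁ = 1) (hv' : v' x₁ = -p x₁) (c : ℂ) :
    egy r (fun x => 1 * v x + c * u x) (fun x => 1 * v' x + c * u' x) x₁ = ‖c‖ ^ 2 - 1 := by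
  have h1 := h.rp x₁ le_rfl
  unfold egy
  beta_reduce
  rw [hu, hu', hv, hv']
  have e : r x₁ * (1 * -p x₁ + c * p x₁) * (starRingEnd ℂ) (1 * 1 + c * 1) =
      ((‖c‖ ^ 2 : ℝ) : ℂ) - 1 + (c - (starRingEnd ℂ) c) := by
    push_cast
    rw [← Complex.mul_conj' c]
    simp only [one_mul, mul_one, map_add, map_one]
    linear_combination (c - 1) * (1 + (starRingEnd ℂ) c) * h1
  rw [e]
  simp only [Complex.add_re, Complex.sub_re, Complex.ofReal_re, Complex.one_re, Complex.conj_re]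
  ring

lemma one_le_egy (h : EnergyData W p r τ x₁ C) (hδ : ‖δ‖ ≤ C ^ 2 / 2)
    (hsu : IsSol (fun x => W x - δ) 0 u u') (hu : u x₁ = 1) (hu' : u' x₁ = p x₁) {x : ℝ}
    (hx : x₁ ≤ x) : 1 ≤ egy r u u' x := by
  refine le_trans (le_of_eq ?_) (h.egy_mono hδ hsu le_rfl hx)
  unfold egy
  rw [hu, hu', h.rp x₁ le_rfl]
  simp

lemma ne_zero_of_data (h : EnergyData W p r τ x₁ C) (hδ : ‖δ‖ ≤ C ^ 2 / 2)
    (hsu : IsSol (fun x => W x - δ) 0 u u') (hu : u x₁ = 1) (hu' : u' x₁ = p x₁) {x : ℝ}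
    (hx : x₁ ≤ x) : u x ≠ 0 := by
  intro h0
  have := h.one_le_egy hδ hsu hu hu' hx
  unfold egy at this
  rw [h0] at this
  simp at this
  linarith

lemma integral_nrg_le (h : EnergyData W p r τ x₁ C) (hδ : ‖δ‖ ≤ C ^ 2 / 2)
    (hsu : IsSol (fun x => W x - δ) 0 u u') (hsv : IsSol (fun x => W x - δ) 0 v v')
    (hu : u x₁ = 1) (hu' : u' x₁ = p x₁) (hv : v x₁ = 1) (hv' : v' x₁ = -p x₁) {c : ℂ} {T : ℝ}
    (hT : x₁ ≤ T)
    (hc : egy r (fun x => 1 * v x + c * u x) (fun x => 1 * v' x + c * u' x) T ≤ 0) :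
    C / 2 * (∫ x in x₁..T, nrg r (fun x => 1 * v x + c * u x) (fun x => 1 * v' x + c * u' x) x)
      ≤ 1 := by
  have h1 := h.energy hδ (hsv.comb hsu 1 c) le_rfl hT
  rw [h.egy_data hu hu' hv hv' c] at h1
  have := sq_nonneg ‖c‖
  linarith

/-- Nested-disc estimate: two parameters whose energy forms are nonpositive at `T` are within
`O((T - x₁)^{-1/2})` of each other. -/
lemma disc_estimate (h : EnergyData W p r τ x₁ C) (hδ : ‖δ‖ ≤ C ^ 2 / 2)
    (hsu : IsSol (fun x => W x - δ) 0 u u') (hsv : IsSol (fun x => W x - δ) 0 v v')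
    (hu : u x₁ = 1) (hu' : u' x₁ = p x₁) (hv : v x₁ = 1) (hv' : v' x₁ = -p x₁) {c d : ℂ} {T : ℝ}
    (hT : x₁ ≤ T)
    (hc : egy r (fun x => 1 * v x + c * u x) (fun x => 1 * v' x + c * u' x) T ≤ 0)
    (hd : egy r (fun x => 1 * v x + d * u x) (fun x => 1 * v' x + d * u' x) T ≤ 0) :
    C * (‖c - d‖ ^ 2 * (T - x₁)) ≤ 4 := by
  have hc1 := h.integral_nrg_le hδ hsu hsv hu hu' hv hv' hT hc
  have hd1 := h.integral_nrg_le hδ hsu hsv hu hu' hv hv' hT hd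
  have hci := h.intervalIntegrable_nrg (hsv.comb hsu 1 c) le_rfl hT
  have hdi := h.intervalIntegrable_nrg (hsv.comb hsu 1 d) le_rfl hT
  have h1 : ∫ x in x₁..T, 2 * ‖c - d‖ ^ 2 ≤
      ∫ x in x₁..T, (2 * nrg r (fun x => 1 * v x + c * u x) (fun x => 1 * v' x + c * u' x) x +
        2 * nrg r (fun x => 1 * v x + d * u x) (fun x => 1 * v' x + d * u' x) x) := by
    refine intervalIntegral.integral_mono_on hT intervalIntegrable_const
      ((hci.const_mul _).add (hdi.const_mul _)) fun x hx => ?_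
    have h2 := h.one_le_egy hδ hsu hu hu' hx.1
    have h3 := two_egy_le r u u' x
    have h4 : ∀ a b : ℂ, ‖a - b‖ ^ 2 ≤ 2 * ‖a‖ ^ 2 + 2 * ‖b‖ ^ 2 := fun a b => by
      nlinarith [norm_sub_le a b, norm_nonneg (a - b), sq_nonneg (‖a‖ - ‖b‖)]
    have h5 := h4 (1 * v x + c * u x) (1 * v x + d * u x)
    have h6 := h4 (r x * (1 * v' x + c * u' x)) (r x * (1 * v' x + d * u' x))
    rw [show 1 * v x + c * u x - (1 * v x + d * u x) = (c - d) * u x by ring, norm_mul,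
      mul_pow] at h5
    rw [show r x * (1 * v' x + c * u' x) - r x * (1 * v' x + d * u' x) =
      (c - d) * (r x * u' x) by ring, norm_mul, mul_pow] at h6
    have h7 : ‖c - d‖ ^ 2 * 2 ≤ ‖c - d‖ ^ 2 * nrg r u u' x :=
      mul_le_mul_of_nonneg_left (by linarith) (by positivity)
    unfold nrg at h7 ⊢
    linarith
  rw [intervalIntegral.integral_add (hci.const_mul _) (hdi.const_mul _),
    intervalIntegral.integral_const_mul, intervalIntegral.integral_const_mul (2 : ℝ),
    intervalIntegral.integral_const_mul (2 : ℝ), intervalIntegral.integral_const,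
    smul_eq_mul] at h1
  have h8 := mul_le_mul_of_nonneg_left h1 h.C_pos.le
  linarith

/-- If the solutions vanishing at the points `x₁ + n + 1` converge, the limit is square integrable
and has no zeros on `[x₁, ∞)`. -/
lemma limit_solution (h : EnergyData W p r τ x₁ C) (hδ : ‖δ‖ ≤ C ^ 2 / 2)
    (hsu : IsSol (fun x => W x - δ) 0 u u') (hsv : IsSol (fun x => W x - δ) 0 v v')
    (hu : u x₁ = 1) (hu' : u' x₁ = p x₁) (hv : v x₁ = 1) (hv' : v' x₁ = -p x₁) {g : ℕ → ℂ}
    {c : ℂ} (hg : Tendsto g atTop (𝓝 c))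
    (hgn : ∀ T, x₁ ≤ T → ∀ᶠ n in atTop,
      egy r (fun x => 1 * v x + g n * u x) (fun x => 1 * v' x + g n * u' x) T ≤ 0) :
    L2B (fun x => 1 * v x + c * u x) ∧ ∀ x, x₁ ≤ x → 1 * v x + c * u x ≠ 0 := by
  have hs := hsv.comb hsu 1 c
  have hC := h.C_pos
  have hnp : ∀ T, x₁ ≤ T →
      egy r (fun x => 1 * v x + c * u x) (fun x => 1 * v' x + c * u' x) T ≤ 0 := by
    intro T hT
    have hcont : Continuous fun d : ℂ =>
        egy r (fun x => 1 * v x + d * u x) (fun x => 1 * v' x + d * u' x) T := by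
      unfold egy; fun_prop
    exact le_of_tendsto ((hcont.tendsto c).comp hg) (hgn T hT)
  constructor
  · refine L2B.of_tail (I := 2 / C) hs.1.continuousOn h.x₁_nonneg fun T hT => ?_
    have h1 := h.integral_nrg_le hδ hsu hsv hu hu' hv hv' hT (hnp T hT)
    have h2 : ∫ x in x₁..T, ‖1 * v x + c * u x‖ ^ 2 ≤
        ∫ x in x₁..T, nrg r (fun x => 1 * v x + c * u x) (fun x => 1 * v' x + c * u' x) x := by
      refine intervalIntegral.integral_mono_on hT
        (intervalIntegrable_normSq hs.1.continuousOn h.x₁_nonneg (h.x₁_nonneg.trans hT))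
        (h.intervalIntegrable_nrg hs le_rfl hT) fun x _ => ?_
      unfold nrg
      have := sq_nonneg ‖r x * (1 * v' x + c * u' x)‖
      linarith
    rw [le_div_iff₀ hC]
    nlinarith
  · intro x hx h0
    -- a zero at `x` makes the energy form positive immediately after `x`
    have hx0 := h.x₁_nonneg.trans hx
    have hwr := hs.wronskian hsu hx0
    rw [← hs.wronskian hsu h.x₁_nonneg] at hwr
    rw [h0, hu, hu', hv, hv'] at hwr
    have hp0 : p x₁ ≠ 0 := fun hp => by
      have := h.re_p x₁ le_rfl
      rw [hp, Complex.zero_re] at this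
      linarith
    have hd0 : 1 * v' x + c * u' x ≠ 0 := fun hd => by
      rw [hd] at hwr
      apply hp0
      linear_combination (-1 / 2 : ℂ) * hwr
    have hr0 : r x ≠ 0 := fun hr => by
      have := h.rp x hx
      rw [hr, zero_mul] at this
      exact zero_ne_one this
    have h1 := h.energy hδ hs hx (by linarith : x ≤ x + 1)
    have h2 := hnp (x + 1) (by linarith)
    have h3 : egy r (fun x => 1 * v x + c * u x) (fun x => 1 * v' x + c * u' x) x = 0 := by
      unfold egy; beta_reduce; rw [h0]; simp
    have h4 : 0 < ∫ t in x..(x + 1),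
        nrg r (fun x => 1 * v x + c * u x) (fun x => 1 * v' x + c * u' x) t := by
      refine intervalIntegral.integral_pos (by linarith)
        ((h.continuousOn_nrg hs).mono fun t ht => hx.trans ht.1)
        (fun t _ => by unfold nrg; positivity) ⟨x, ⟨le_rfl, by linarith⟩, ?_⟩
      unfold nrg
      beta_reduce
      have := norm_pos_iff.2 (mul_ne_zero hr0 hd0)
      positivity
    have h5 := mul_pos (half_pos hC) h4
    linarith

end EnergyData

/-- Near each point of `𝒩` there is a holomorphic family of square integrable solutions without
zeros on a half-line. It is the limit of the families vanishing at `X = x₁ + n + 1`. -/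
theorem exists_local_section {q q' : ℝ → ℂ} {θ θ' φ φ' : ℂ → ℝ → ℂ}
    (hF : ∀ lam, FundSys (fun x => q x - lam) (θ lam) (θ' lam) (φ lam) (φ' lam))
    (hθ : ∀ x, 0 ≤ x → Differentiable ℂ fun lam => θ lam x)
    (hθ' : ∀ x, 0 ≤ x → Differentiable ℂ fun lam => θ' lam x)
    (hφ : ∀ x, 0 ≤ x → Differentiable ℂ fun lam => φ lam x)
    (hφ' : ∀ x, 0 ≤ x → Differentiable ℂ fun lam => φ' lam x)
    {lam₀ : ℂ} (hl : lam₀ ∈ NSet q q') :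
    ∃ ε > 0, ∃ X : ℝ, 0 ≤ X ∧ ∃ c₁ c₂ : ℂ → ℂ,
      DifferentiableOn ℂ c₁ (Metric.ball lam₀ ε) ∧ DifferentiableOn ℂ c₂ (Metric.ball lam₀ ε) ∧
      ∀ lam ∈ Metric.ball lam₀ ε,
        L2B (fun x => c₁ lam * θ lam x + c₂ lam * φ lam x) ∧
        ∀ x, X ≤ x → c₁ lam * θ lam x + c₂ lam * φ lam x ≠ 0 := by
  obtain ⟨x₁, C, hx₁, hA⟩ := hl
  obtain ⟨p, r, τ, h⟩ := exists_energyData hx₁ hA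
  have hC := h.C_pos
  set P := p x₁ with hP
  set B := Metric.ball lam₀ (C ^ 2 / 2) with hB
  have hδ : ∀ lam ∈ B, ‖lam - lam₀‖ ≤ C ^ 2 / 2 := fun lam hlam => by
    rw [hB, Metric.mem_ball, dist_eq_norm] at hlam; exact hlam.le
  -- `u`, `v` have data `(1, p)`, `(1, -p)` at `x₁`
  set u₁ : ℂ → ℂ := fun lam => 1 * φ' lam x₁ - P * φ lam x₁ with hu₁
  set u₂ : ℂ → ℂ := fun lam => P * θ lam x₁ - 1 * θ' lam x₁ with hu₂
  set v₁ : ℂ → ℂ := fun lam => 1 * φ' lam x₁ - (-P) * φ lam x₁ with hv₁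
  set v₂ : ℂ → ℂ := fun lam => (-P) * θ lam x₁ - 1 * θ' lam x₁ with hv₂
  have hu₁d : Differentiable ℂ u₁ := ((hφ' _ hx₁).const_mul _).sub ((hφ _ hx₁).const_mul _)
  have hu₂d : Differentiable ℂ u₂ := ((hθ _ hx₁).const_mul _).sub ((hθ' _ hx₁).const_mul _)
  have hv₁d : Differentiable ℂ v₁ := ((hφ' _ hx₁).const_mul _).sub ((hφ _ hx₁).const_mul _)
  have hv₂d : Differentiable ℂ v₂ := ((hθ _ hx₁).const_mul _).sub ((hθ' _ hx₁).const_mul _)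
  set u : ℂ → ℝ → ℂ := fun lam x => u₁ lam * θ lam x + u₂ lam * φ lam x with hu
  set u' : ℂ → ℝ → ℂ := fun lam x => u₁ lam * θ' lam x + u₂ lam * φ' lam x with hu'
  set v : ℂ → ℝ → ℂ := fun lam x => v₁ lam * θ lam x + v₂ lam * φ lam x with hv
  set v' : ℂ → ℝ → ℂ := fun lam x => v₁ lam * θ' lam x + v₂ lam * φ' lam x with hv'
  have hpot : ∀ lam, (fun x => q x - lam) = fun x => q x - lam₀ - (lam - lam₀) := fun lam => by
    funext x; ring
  have hsu : ∀ lam, IsSol (fun x => q x - lam₀ - (lam - lam₀)) 0 (u lam) (u' lam) := fun lam => by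
    rw [← hpot]; exact (hF lam).solθ.comb (hF lam).solφ _ _
  have hsv : ∀ lam, IsSol (fun x => q x - lam₀ - (lam - lam₀)) 0 (v lam) (v' lam) := fun lam => by
    rw [← hpot]; exact (hF lam).solθ.comb (hF lam).solφ _ _
  have hu0 : ∀ lam, u lam x₁ = 1 := fun lam => ((hF lam).data hx₁ 1 P).1
  have hu0' : ∀ lam, u' lam x₁ = p x₁ := fun lam => ((hF lam).data hx₁ 1 P).2
  have hv0 : ∀ lam, v lam x₁ = 1 := fun lam => ((hF lam).data hx₁ 1 (-P)).1
  have hv0' : ∀ lam, v' lam x₁ = -p x₁ := fun lam => ((hF lam).data hx₁ 1 (-P)).2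
  set X : ℕ → ℝ := fun n => x₁ + (n + 1) with hX
  have hXx : ∀ n, x₁ ≤ X n := fun n => by simp only [hX]; linarith [n.cast_nonneg (α := ℝ)]
  have hXm : ∀ {n m : ℕ}, n ≤ m → X n ≤ X m := fun {n m} hnm => by
    simp only [hX]
    have : (n : ℝ) ≤ m := by exact_mod_cast hnm
    linarith
  have hune : ∀ lam ∈ B, ∀ n, u lam (X n) ≠ 0 := fun lam hlam n =>
    h.ne_zero_of_data (hδ lam hlam) (hsu lam) (hu0 lam) (hu0' lam) (hXx n)
  set g : ℕ → ℂ → ℂ := fun n lam => -(v lam (X n)) / u lam (X n) with hg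
  have hgd : ∀ n, DifferentiableOn ℂ (g n) B := by
    intro n
    have hX0 := hx₁.trans (hXx n)
    exact (((hv₁d.mul (hθ _ hX0)).add (hv₂d.mul (hφ _ hX0))).neg.differentiableOn).div
      (((hu₁d.mul (hθ _ hX0)).add (hu₂d.mul (hφ _ hX0))).differentiableOn)
      fun lam hlam => hune lam hlam n
  have hQ : ∀ lam ∈ B, ∀ n T, x₁ ≤ T → T ≤ X n →
      egy r (fun x => 1 * v lam x + g n lam * u lam x)
        (fun x => 1 * v' lam x + g n lam * u' lam x) T ≤ 0 := by
    intro lam hlam n T hT hTX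
    refine (h.egy_mono (hδ lam hlam) ((hsv lam).comb (hsu lam) 1 _) hT hTX).trans (le_of_eq ?_)
    have h0 : 1 * v lam (X n) + g n lam * u lam (X n) = 0 := by
      simp only [hg]
      rw [div_mul_cancel₀ _ (hune lam hlam n)]
      ring
    unfold egy
    beta_reduce
    rw [h0]
    simp
  have hdisc : ∀ lam ∈ B, ∀ n m, n ≤ m →
      ‖g n lam - g m lam‖ ^ 2 ≤ 4 / C * (1 / ((n : ℝ) + 1)) := by
    intro lam hlam n m hnm
    have h1 := h.disc_estimate (hδ lam hlam) (hsu lam) (hsv lam) (hu0 lam) (hu0' lam) (hv0 lam)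
      (hv0' lam) (hXx n) (hQ lam hlam n (X n) (hXx n) le_rfl)
      (hQ lam hlam m (X n) (hXx n) (hXm hnm))
    rw [show X n - x₁ = (n : ℝ) + 1 by simp only [hX]; ring] at h1
    rw [mul_one_div, div_div, le_div_iff₀ (by positivity)]
    linarith
  have hcau : UniformCauchySeqOn g atTop B := by
    rw [Metric.uniformCauchySeqOn_iff]
    intro ε hε
    have hlim := (tendsto_one_div_add_atTop_nhds_zero_nat (𝕜 := ℝ)).const_mul (4 / C)
    rw [mul_zero] at hlim
    obtain ⟨N, hN⟩ := (hlim.eventually (gt_mem_nhds (show (0 : ℝ) < ε ^ 2 by positivity))).exists_forall_of_atTop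
    have aux : ∀ n m, N ≤ n → n ≤ m → ∀ lam ∈ B, dist (g n lam) (g m lam) < ε := by
      intro n m hn hnm lam hlam
      rw [dist_eq_norm]
      exact lt_of_pow_lt_pow_left₀ 2 hε.le ((hdisc lam hlam n m hnm).trans_lt (hN n hn))
    refine ⟨N, fun m hm n hn lam hlam => ?_⟩
    rcases le_total m n with hmn | hmn
    · exact aux m n hm hmn lam hlam
    · rw [dist_comm]; exact aux n m hn hmn lam hlam
  have hex : ∀ lam, ∃ c, lam ∈ B → Tendsto (fun n => g n lam) atTop (𝓝 c) := by
    intro lam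
    by_cases hlam : lam ∈ B
    · obtain ⟨c, hc⟩ := cauchySeq_tendsto_of_complete (hcau.cauchySeq hlam)
      exact ⟨c, fun _ => hc⟩
    · exact ⟨0, fun hh => absurd hh hlam⟩
  choose G hG using hex
  have hGu := hcau.tendstoUniformlyOn_of_tendsto hG
  have hGd : DifferentiableOn ℂ G B :=
    hGu.tendstoLocallyUniformlyOn.differentiableOn
      (Filter.Eventually.of_forall hgd) Metric.isOpen_ball
  refine ⟨C ^ 2 / 2, by positivity, x₁, hx₁, fun lam => v₁ lam + G lam * u₁ lam,
    fun lam => v₂ lam + G lam * u₂ lam, hv₁d.differentiableOn.add (hGd.mul hu₁d.differentiableOn),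
    hv₂d.differentiableOn.add (hGd.mul hu₂d.differentiableOn), fun lam hlam => ?_⟩
  have hfin := h.limit_solution (hδ lam hlam) (hsu lam) (hsv lam) (hu0 lam) (hu0' lam) (hv0 lam)
    (hv0' lam) (hG lam hlam) fun T hT => by
      obtain ⟨N, hN⟩ := exists_nat_ge (T - x₁)
      filter_upwards [eventually_ge_atTop N] with n hn
      refine hQ lam hlam n T hT ?_
      have : (N : ℝ) ≤ n := by exact_mod_cast hn
      simp only [hX]
      linarith
  have he : ∀ x, 1 * v lam x + G lam * u lam x =
      (v₁ lam + G lam * u₁ lam) * θ lam x + (v₂ lam + G lam * u₂ lam) * φ lam x := fun x => by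
    simp only [hu, hv]; ring
  simp only [he] at hfin
  exact hfin

/-! ### The Cauchy–Pompeiu formula -/

/-- The unit vector `cos t + i sin t`. -/
def dirv (t : ℝ) : ℂ := (Real.cos t : ℂ) + (Real.sin t : ℂ) * I

lemma norm_dirv (t : ℝ) : ‖dirv t‖ = 1 := by
  unfold dirv
  rw [Complex.ofReal_cos, Complex.ofReal_sin, Complex.norm_cos_add_sin_mul_I]

lemma continuous_dirv : Continuous dirv := by
  unfold dirv
  fun_prop

lemma hasDerivAt_dirv (t : ℝ) : HasDerivAt dirv (I * dirv t) t := by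
  have h1 := (Real.hasDerivAt_cos t).ofReal_comp
  have h2 := ((Real.hasDerivAt_sin t).ofReal_comp).mul_const I
  refine (h1.add h2).congr_deriv ?_
  unfold dirv
  push_cast
  linear_combination (- Complex.sin t) * Complex.I_sq

/-- Twice the Wirtinger derivative `∂F/∂w̄`. -/
def dbar (F : ℂ → ℂ) (w : ℂ) : ℂ := fderiv ℝ F w 1 + I * fderiv ℝ F w I

lemma continuous_dbar {F : ℂ → ℂ} (hF : ContDiff ℝ 1 F) : Continuous (dbar F) := by
  have h := hF.continuous_fderiv one_ne_zero
  unfold dbar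
  fun_prop

lemma fderiv_dirv_add (L : ℂ →L[ℝ] ℂ) (t : ℝ) :
    L (dirv t) + I * L (I * dirv t) = (dirv t)⁻¹ * (L 1 + I * L I) := by
  have e1 : dirv t = (Real.cos t) • (1 : ℂ) + (Real.sin t) • I := by
    simp [dirv]
  have e2 : I * dirv t = (-Real.sin t) • (1 : ℂ) + (Real.cos t) • I := by
    simp only [dirv, Complex.real_smul]
    push_cast
    linear_combination (Complex.sin t) * Complex.I_sq
  have e3 : (dirv t)⁻¹ = (Real.cos t : ℂ) - (Real.sin t : ℂ) * I := by
    refine (eq_inv_of_mul_eq_one_left ?_).symm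
    unfold dirv
    have := Complex.cos_sq_add_sin_sq (t : ℂ)
    push_cast
    linear_combination this - Complex.sin t ^ 2 * Complex.I_sq
  rw [e2, e3, e1]
  rw [map_add, map_add, map_smul, map_smul, map_smul, map_smul]
  simp only [Complex.real_smul]
  push_cast
  linear_combination (Complex.sin t * (L I)) * Complex.I_sq

/-- The Cauchy–Pompeiu formula at the origin for compactly supported `C¹` functions. In polar
coordinates the integrand is `∂F/∂r + (i/r) ∂F/∂θ`; the first term integrates in `r` to
`-F 0` and the second integrates in `θ` to zero. -/
lemma pompeiu_zero {F : ℂ → ℂ} (hF : ContDiff ℝ 1 F) (hc : HasCompactSupport F) :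
    ∫ w, w⁻¹ * dbar F w = -(2 * Real.pi) * F 0 := by
  obtain ⟨R, hR⟩ : ∃ R, ∀ w : ℂ, R < ‖w‖ → F w = 0 := by
    obtain ⟨R, hR⟩ := hc.isCompact.isBounded.exists_norm_le
    exact ⟨R, fun w hw => by
      by_contra h
      exact absurd (hR w (subset_tsupport _ h)) (not_le.2 hw)⟩
  have hR' : ∀ w : ℂ, R < ‖w‖ → fderiv ℝ F w = 0 := by
    intro w hw
    have : F =ᶠ[𝓝 w] fun _ => 0 := by
      filter_upwards [(isOpen_lt continuous_const continuous_norm).mem_nhds hw] with v hv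
      exact hR v hv
    rw [this.fderiv_eq]
    simp
  have hD := hF.continuous_fderiv one_ne_zero
  have hdF : ∀ w, HasFDerivAt F (fderiv ℝ F w) w := fun w =>
    (hF.differentiable one_ne_zero w).hasFDerivAt
  set T : Set (ℝ × ℝ) := Set.Ioi (0 : ℝ) ×ˢ Set.Ioo (-Real.pi) Real.pi with hT
  have hTm : MeasurableSet T := measurableSet_Ioi.prod measurableSet_Ioo
  let A : ℝ × ℝ → ℂ := fun p => fderiv ℝ F (p.1 * dirv p.2) (dirv p.2)
  let B : ℝ × ℝ → ℂ := fun p => I * fderiv ℝ F (p.1 * dirv p.2) (I * dirv p.2)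
  have cd := continuous_dirv
  have hAc : Continuous A := by
    refine Continuous.clm_apply (hD.comp ?_) ?_ <;> fun_prop
  have hBc : Continuous B := by
    refine continuous_const.mul (Continuous.clm_apply (hD.comp ?_) ?_) <;> fun_prop
  have hint : ∀ G : ℝ × ℝ → ℂ, Continuous G → (∀ p, R < ‖(p.1 : ℂ) * dirv p.2‖ → G p = 0) →
      IntegrableOn G T := by
    intro G hG h0
    have h1 : IntegrableOn G (Set.Icc 0 R ×ˢ Set.Icc (-Real.pi) Real.pi) :=
      hG.continuousOn.integrableOn_compact (isCompact_Icc.prod isCompact_Icc)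
    refine IntegrableOn.of_forall_sdiff_eq_zero h1 hTm ?_
    rintro ⟨r, t⟩ ⟨⟨hr, ht⟩, hn⟩
    apply h0
    simp only [Set.mem_prod, Set.mem_Icc, Set.mem_Ioi, Set.mem_Ioo] at *
    rw [norm_mul, norm_dirv, mul_one, Complex.norm_real, Real.norm_of_nonneg hr.le]
    by_contra h
    exact hn ⟨⟨hr.le, not_lt.1 h⟩, ht.1.le, ht.2.le⟩
  have hA : IntegrableOn A T := hint A hAc fun p hp => by simp [A, hR' _ hp]
  have hB : IntegrableOn B T := hint B hBc fun p hp => by simp [B, hR' _ hp]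
  have e1 : ∫ w, w⁻¹ * dbar F w = ∫ p in T, (A p + B p) := by
    rw [← Complex.integral_comp_polarCoord_symm]
    refine setIntegral_congr_fun hTm ?_
    rintro ⟨r, t⟩ ⟨hr, ht⟩
    have hr0 : (r : ℂ) ≠ 0 := by
      have : 0 < r := hr
      exact_mod_cast this.ne'
    have e : Complex.polarCoord.symm (r, t) = r * dirv t := by
      rw [Complex.polarCoord_symm_apply, dirv]
    beta_reduce
    rw [e]
    simp only [A, B]
    rw [fderiv_dirv_add, dbar, Complex.real_smul, mul_inv]
    field_simp
  have e2 : ∫ p in T, A p = -(2 * Real.pi) * F 0 := by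
    rw [Measure.volume_eq_prod] at hA ⊢
    rw [hT, ← setIntegral_prod_swap, setIntegral_prod]
    · have : ∀ t ∈ Set.Ioo (-Real.pi) Real.pi, ∫ r in Set.Ioi (0 : ℝ), A (r, t) = - F 0 := by
        intro t _
        have hd : ∀ r : ℝ, HasDerivAt (fun r : ℝ => F (r * dirv t)) (A (r, t)) r := by
          intro r
          have : HasDerivAt (fun r : ℝ => (r : ℂ) * dirv t) (dirv t) r := by
            simpa using (hasDerivAt_id r).ofReal_comp.mul_const (dirv t)
          exact (hdF _).comp_hasDerivAt r this
        have hcs : HasCompactSupport fun r : ℝ => F (r * dirv t) := by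
          refine HasCompactSupport.intro (isCompact_Icc (a := -R) (b := R)) fun r hr => ?_
          apply hR
          rw [norm_mul, norm_dirv, mul_one, Complex.norm_real, Real.norm_eq_abs]
          by_contra h
          exact hr (abs_le.1 (not_lt.1 h))
        have hC : ContDiff ℝ 1 fun r : ℝ => F (r * dirv t) := by
          refine hF.comp ?_
          exact Complex.ofRealCLM.contDiff.mul contDiff_const
        have := HasCompactSupport.integral_Ioi_deriv_eq hC hcs 0
        simp only [(hd _).deriv] at this
        simpa using this
      simp only [Prod.swap_prod_mk]
      rw [setIntegral_congr_fun measurableSet_Ioo (g := fun _ => - F 0) (fun t ht => this t ht)]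
      simp [Real.pi_pos.le]
      left
      ring
    · exact hA.swap
  have e3 : ∫ p in T, B p = 0 := by
    rw [Measure.volume_eq_prod] at hB ⊢
    rw [hT, setIntegral_prod _ hB]
    have : ∀ r ∈ Set.Ioi (0 : ℝ), ∫ t in Set.Ioo (-Real.pi) Real.pi, B (r, t) = 0 := by
      intro r hr
      have hr0 : (r : ℂ) ≠ 0 := by
        have : 0 < r := hr
        exact_mod_cast this.ne'
      have hd : ∀ t : ℝ, HasDerivAt (fun t : ℝ => I * (r : ℂ)⁻¹ * F (r * dirv t)) (B (r, t)) t := by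
        intro t
        have h1 : HasDerivAt (fun t : ℝ => (r : ℂ) * dirv t) (r * (I * dirv t)) t :=
          (hasDerivAt_dirv t).const_mul _
        have h2 := ((hdF _).comp_hasDerivAt t h1).const_mul (I * (r : ℂ)⁻¹)
        refine h2.congr_deriv ?_
        simp only [B]
        have : (r : ℂ) * (I * dirv t) = r • (I * dirv t) := by simp
        rw [this, map_smul, Complex.real_smul]
        field_simp
      rw [← integral_Ioc_eq_integral_Ioo, ← intervalIntegral.integral_of_le
        (by linarith [Real.pi_pos]), intervalIntegral.integral_eq_sub_of_hasDerivAt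
        (fun t _ => hd t) ((hBc.comp (by fun_prop)).intervalIntegrable _ _)]
      simp [dirv]
    rw [setIntegral_congr_fun measurableSet_Ioi (g := fun _ => 0) (fun t ht => this t ht)]
    simp
  rw [e1, integral_add hA hB, e2, e3, add_zero]

lemma pompeiu {F : ℂ → ℂ} (hF : ContDiff ℝ 1 F) (hc : HasCompactSupport F) (z : ℂ) :
    ∫ w, (w - z)⁻¹ * dbar F w = -(2 * Real.pi) * F z := by
  have h1 : ContDiff ℝ 1 fun w => F (w + z) := hF.comp (contDiff_id.add contDiff_const)
  have h2 : HasCompactSupport fun w => F (w + z) :=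
    hc.comp_homeomorph (Homeomorph.addRight z)
  have h := pompeiu_zero h1 h2
  rw [zero_add] at h
  rw [← h, ← integral_add_right_eq_self (fun w => (w - z)⁻¹ * dbar F w) z]
  simp only [add_sub_cancel_right, dbar, fderiv_comp_add_right]

/-! ### Runge approximation -/

lemma dbar_eq_zero {f : ℂ → ℂ} {w : ℂ} (h : DifferentiableAt ℂ f w) : dbar f w = 0 := by
  unfold dbar
  rw [h.fderiv_restrictScalars ℝ]
  have : fderiv ℂ f w I = I * fderiv ℂ f w 1 := by
    conv_lhs => rw [show (I : ℂ) = I • (1 : ℂ) by simp, map_smul]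
    simp
  simp only [ContinuousLinearMap.coe_restrictScalars']
  rw [this, ← mul_assoc, Complex.I_mul_I]
  ring

/-- A function holomorphic near a compact set agrees near it with a compactly supported `C¹`
function. -/
lemma exists_cutoff {K U : Set ℂ} (hK : IsCompact K) (hU : IsOpen U) (hKU : K ⊆ U) {f : ℂ → ℂ}
    (hf : DifferentiableOn ℂ f U) :
    ∃ F : ℂ → ℂ, ContDiff ℝ 1 F ∧ HasCompactSupport F ∧ Set.EqOn F f K ∧
      ∃ O : Set ℂ, IsOpen O ∧ K ⊆ O ∧ ∀ w ∈ O, dbar F w = 0 := by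
  obtain ⟨L, hL, hKL, hLU⟩ := exists_compact_between hK hU hKU
  obtain ⟨χ, h1, h0, -⟩ := exists_contMDiffMap_one_nhds_of_subset_interior
    (n := 1) (modelWithCornersSelf ℝ ℂ) hK.isClosed hKL
  have hχ : ContDiff ℝ 1 (χ : ℂ → ℝ) := χ.contMDiff.contDiff
  obtain ⟨O, hO, hKO, hO1⟩ := mem_nhdsSet_iff_exists.1 h1
  refine ⟨fun w => χ w • f w, ?_, ?_, ?_, O ∩ U, hO.inter hU, fun z hz => ⟨hKO hz, hKU hz⟩, ?_⟩
  · rw [contDiff_iff_contDiffAt]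
    intro w
    by_cases hw : w ∈ U
    · have h2 : ContDiffAt ℂ 1 f w := (hf.contDiffOn hU).contDiffAt (hU.mem_nhds hw)
      exact hχ.contDiffAt.smul (h2.restrict_scalars ℝ)
    · have h2 : Lᶜ ∈ 𝓝 w := hL.isClosed.isOpen_compl.mem_nhds fun h => hw (hLU h)
      refine contDiffAt_const (c := (0 : ℂ)) |>.congr_of_eventuallyEq ?_
      filter_upwards [h2] with v hv
      rw [h0 v hv, zero_smul]
  · exact HasCompactSupport.intro hL fun w hw => by rw [h0 w hw, zero_smul]
  · intro z hz
    have : χ z = 1 := hO1 (hKO hz)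
    simp [this]
  · rintro w ⟨hwO, hwU⟩
    have : (fun w => χ w • f w) =ᶠ[𝓝 w] f := by
      filter_upwards [hO.mem_nhds hwO] with v hv
      have : χ v = 1 := hO1 hv
      simp [this]
    have e : dbar (fun w => χ w • f w) w = dbar f w := by
      unfold dbar
      rw [this.fderiv_eq]
    rw [e]
    exact dbar_eq_zero (hf.differentiableAt (hU.mem_nhds hwU))

/-- The restrictions to `K` of functions holomorphic on `Ω`. -/
def holRestr (K Ω : Set ℂ) : Submodule ℂ C(K, ℂ) where
  carrier := {u | ∃ a : ℂ → ℂ, DifferentiableOn ℂ a Ω ∧ ∀ z : K, u z = a z}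
  add_mem' := by
    rintro u v ⟨a, ha, hu⟩ ⟨b, hb, hv⟩
    exact ⟨fun z => a z + b z, ha.add hb, fun z => by simp [hu, hv]⟩
  zero_mem' := ⟨fun _ => 0, differentiableOn_const 0, fun z => by simp⟩
  smul_mem' := by
    rintro c u ⟨a, ha, hu⟩
    exact ⟨fun z => c * a z, ha.const_mul c, fun z => by simp [hu]⟩

/-- If `u (1 - g) = h` on `K`, with `g`, `h` holomorphic on `Ω` and `‖g‖ ≤ ρ < 1` on `K`, then `u`
is the uniform limit on `K` of the partial sums of `h ∑ gᵏ`. -/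
lemma mem_closure_holRestr_of_geometric {K Ω : Set ℂ} (hK : IsCompact K) (hKΩ : K ⊆ Ω)
    {u : C(K, ℂ)}
    {g h : ℂ → ℂ} {ρ : ℝ} (hg : DifferentiableOn ℂ g Ω) (hh : DifferentiableOn ℂ h Ω)
    (hρ0 : 0 ≤ ρ) (hρ : ρ < 1)
    (hgK : ∀ z : K, ‖g z‖ ≤ ρ) (hu : ∀ z : K, u z * (1 - g z) = h z) :
    u ∈ (holRestr K Ω).topologicalClosure := by
  have : CompactSpace K := isCompact_iff_compactSpace.1 hK
  rw [← SetLike.mem_coe, Submodule.topologicalClosure_coe, Metric.mem_closure_iff]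
  intro ε hε
  have ht : Tendsto (fun m : ℕ => ‖u‖ * ρ ^ m) atTop (𝓝 0) := by
    simpa using (tendsto_pow_atTop_nhds_zero_of_lt_one hρ0 hρ).const_mul ‖u‖
  obtain ⟨m, hm⟩ := (ht.eventually (gt_mem_nhds hε)).exists
  let a : ℂ → ℂ := fun z => h z * ∑ k ∈ Finset.range m, g z ^ k
  have ha : DifferentiableOn ℂ a Ω :=
    hh.mul (DifferentiableOn.fun_sum fun k _ => hg.pow k)
  have hua : ∀ z : K, u z - a z = u z * g z ^ m := by
    intro z
    have := geom_sum_mul (g z) m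
    simp only [a]
    rw [← hu z]
    linear_combination (-u z) * (-this)
  have hac : Continuous fun z : K => a z := (ha.continuousOn.mono hKΩ).domRestrict
  refine ⟨⟨fun z => a z, hac⟩, ⟨a, ha, fun z => rfl⟩, ?_⟩
  rw [dist_eq_norm]
  refine lt_of_le_of_lt ((ContinuousMap.norm_le _ (by positivity)).2 fun z => ?_) hm
  change ‖u z - a z‖ ≤ _
  rw [hua, norm_mul, norm_pow]
  gcongr
  · exact u.norm_coe_le_norm z
  · exact hgK z

/-- The pole-pushing condition: for every `ζ ∉ K`, the function `1 / (ζ - z)` on `K` is the sum of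
a uniformly convergent geometric series of functions holomorphic on `Ω`. -/
def PolePush (K Ω : Set ℂ) : Prop :=
  ∀ ζ, ζ ∉ K → ∃ (g h : ℂ → ℂ) (ρ : ℝ), DifferentiableOn ℂ g Ω ∧ DifferentiableOn ℂ h Ω ∧
    0 ≤ ρ ∧ ρ < 1 ∧ (∀ z ∈ K, ‖g z‖ ≤ ρ) ∧ ∀ z ∈ K, 1 - g z = h z * (ζ - z)

/-- Runge approximation. By the Cauchy–Pompeiu formula, `f` is on `K` a `C(K, ℂ)`-valued integral
of multiples of the functions `1 / (ζ - z)` with `ζ ∉ K`, each in the closed subspace generated by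
the functions holomorphic on `Ω`. -/
lemma runge {K Ω U : Set ℂ} (hK : IsCompact K) (hKΩ : K ⊆ Ω) (hP : PolePush K Ω) (hU : IsOpen U)
    (hKU : K ⊆ U) {f : ℂ → ℂ} (hf : DifferentiableOn ℂ f U) {ε : ℝ} (hε : 0 < ε) :
    ∃ a : ℂ → ℂ, DifferentiableOn ℂ a Ω ∧ ∀ z ∈ K, ‖f z - a z‖ ≤ ε := by
  have : CompactSpace K := isCompact_iff_compactSpace.1 hK
  obtain ⟨F, hF, hFc, hFf, O, hO, hKO, hO0⟩ := exists_cutoff hK hU hKU hf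
  have hdc := continuous_dbar hF
  have hjoint : Continuous fun p : ℂ × K => (p.1 - p.2)⁻¹ * dbar F p.1 := by
    rw [continuous_iff_continuousAt]
    rintro ⟨ζ, z⟩
    by_cases hζ : ζ ∈ O
    · refine ContinuousAt.congr (f := fun _ => (0 : ℂ)) continuousAt_const ?_
      filter_upwards [continuous_fst.continuousAt.preimage_mem_nhds (hO.mem_nhds hζ)] with p hp
      rw [hO0 p.1 hp, mul_zero]
    · have hne : ζ - z ≠ 0 := by
        intro h
        rw [sub_eq_zero] at h
        exact hζ (h ▸ hKO z.2)
      refine ContinuousAt.mul (ContinuousAt.inv₀ ?_ hne) ?_ <;> fun_prop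
  let Φ : C(ℂ, C(K, ℂ)) := ContinuousMap.curry ⟨_, hjoint⟩
  have hΦ : ∀ ζ z, Φ ζ z = (ζ - z)⁻¹ * dbar F ζ := fun ζ z => rfl
  let S := (holRestr K Ω).topologicalClosure
  have hScl : IsClosed (S : Set C(K, ℂ)) := Submodule.isClosed_topologicalClosure _
  have : CompleteSpace S := hScl.completeSpace_coe
  have hmem : ∀ ζ, Φ ζ ∈ S := by
    intro ζ
    by_cases hζ : ζ ∈ K
    · have : Φ ζ = 0 := by
        ext z
        rw [hΦ, hO0 ζ (hKO hζ), mul_zero]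
        rfl
      rw [this]
      exact S.zero_mem
    · obtain ⟨g, h, ρ, hg, hh, hρ0, hρ, hgK, hgh⟩ := hP ζ hζ
      refine mem_closure_holRestr_of_geometric hK hKΩ (g := g) (h := fun z => dbar F ζ * h z) hg
        (hh.const_mul _) hρ0 hρ (fun z => hgK z z.2) fun z => ?_
      have hne : ζ - z ≠ 0 := by
        intro h
        rw [sub_eq_zero] at h
        exact hζ (h ▸ z.2)
      rw [hgh z z.2, hΦ]
      field_simp
  have hdcs : ∀ ζ, ζ ∉ tsupport F → dbar F ζ = 0 := by
    intro ζ hζ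
    unfold dbar
    rw [image_eq_zero_of_notMem_tsupport (f := fderiv ℝ F)
      (fun h => hζ (tsupport_fderiv_subset ℝ h))]
    simp
  let Ψ : ℂ → S := fun ζ => ⟨Φ ζ, hmem ζ⟩
  have hΨc : Continuous Ψ := Φ.continuous.subtype_mk _
  have hΨs : HasCompactSupport Ψ := by
    refine HasCompactSupport.intro hFc.isCompact fun ζ hζ => ?_
    ext z
    change Φ ζ z = 0
    rw [hΦ, hdcs ζ hζ, mul_zero]
  have hΨi : Integrable Ψ := hΨc.integrable_of_hasCompactSupport hΨs
  let J : S := ∫ ζ, Ψ ζ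
  have hJ : ∀ z : K, (J : C(K, ℂ)) z = -(2 * Real.pi) * f z := by
    intro z
    have h1 := ((ContinuousMap.evalCLM ℂ z).comp S.subtypeL).integral_comp_comm hΨi
    have h2 : ∀ ζ, ((ContinuousMap.evalCLM ℂ z).comp S.subtypeL) (Ψ ζ)
        = (ζ - z)⁻¹ * dbar F ζ := fun ζ => rfl
    simp only [h2] at h1
    rw [pompeiu hF hFc, hFf z.2] at h1
    exact h1.symm
  have hpi : (-(2 * Real.pi) : ℂ) ≠ 0 := by
    simp
  have hJ2 : (-(2 * Real.pi) : ℂ)⁻¹ • (J : C(K, ℂ)) ∈ S := S.smul_mem _ J.2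
  rw [← SetLike.mem_coe, Submodule.topologicalClosure_coe, Metric.mem_closure_iff] at hJ2
  obtain ⟨u, ⟨a, ha, hua⟩, hu⟩ := hJ2 ε hε
  refine ⟨a, ha, fun z hz => ?_⟩
  have h3 := (ContinuousMap.dist_apply_le_dist (⟨z, hz⟩ : K)).trans hu.le
  rw [dist_eq_norm, hua] at h3
  rw [ContinuousMap.smul_apply, hJ, smul_eq_mul, inv_mul_cancel_left₀ hpi] at h3
  exact h3

/-! ### A compact exhaustion and an additive Cousin problem -/

/-- The standard exhaustion of a plane open set by compact sets. -/
def exh (Ω : Set ℂ) (n : ℕ) : Set ℂ :=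
  {z | ‖z‖ ≤ n ∧ ∀ w, w ∉ Ω → 1 / ((n : ℝ) + 1) ≤ dist z w}

section Exhaustion

variable {Ω : Set ℂ}

lemma exh_subset (n : ℕ) : exh Ω n ⊆ Ω := by
  rintro z ⟨-, hz⟩
  by_contra h
  have h1 := hz z h
  rw [dist_self] at h1
  have : 0 < 1 / ((n : ℝ) + 1) := by positivity
  linarith

lemma isCompact_exh (n : ℕ) : IsCompact (exh Ω n) := by
  have hc : IsClosed (exh Ω n) := by
    have : exh Ω n = {z | ‖z‖ ≤ n} ∩ ⋂ w, ⋂ _ : w ∉ Ω, {z | 1 / ((n : ℝ) + 1) ≤ dist z w} := by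
      ext z
      simp [exh]
    rw [this]
    refine (isClosed_le continuous_norm continuous_const).inter ?_
    refine isClosed_iInter fun w => isClosed_iInter fun _ => ?_
    exact isClosed_le continuous_const (continuous_id.dist continuous_const)
  refine (isCompact_closedBall (0 : ℂ) n).of_isClosed_subset hc ?_
  rintro z ⟨hz, -⟩
  simpa using hz

lemma exh_subset_interior (n : ℕ) : exh Ω n ⊆ interior (exh Ω (n + 1)) := by
  rintro z ⟨hz, hzw⟩
  rw [mem_interior_iff_mem_nhds, Metric.mem_nhds_iff]
  have hpos : 0 < 1 / ((n : ℝ) + 1) - 1 / (((n + 1 : ℕ) : ℝ) + 1) := by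
    rw [sub_pos]
    push_cast
    gcongr
    linarith
  have hle : 1 / ((n : ℝ) + 1) ≤ 1 := by
    rw [div_le_one (by positivity)]
    linarith [(Nat.cast_nonneg n : (0 : ℝ) ≤ n)]
  have hp2 : 0 < 1 / (((n + 1 : ℕ) : ℝ) + 1) := by positivity
  refine ⟨_, hpos, fun v hv => ⟨?_, fun w hw => ?_⟩⟩
  · have h1 : ‖v‖ ≤ ‖z‖ + dist v z := by
      rw [dist_eq_norm]
      simpa using norm_add_le z (v - z)
    have := Metric.mem_ball.1 hv
    push_cast
    push_cast at this hp2
    linarith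
  · have h1 := hzw w hw
    have h2 := dist_triangle z v w
    have := Metric.mem_ball'.1 hv
    linarith

lemma exh_mono {m n : ℕ} (h : m ≤ n) : exh Ω m ⊆ exh Ω n := by
  induction n, h using Nat.le_induction with
  | base => exact subset_rfl
  | succ k _ ih => exact ih.trans ((exh_subset_interior k).trans interior_subset)

lemma exists_mem_exh (hΩ : IsOpen Ω) {z : ℂ} (hz : z ∈ Ω) : ∃ n, z ∈ exh Ω n := by
  obtain ⟨ε, hε, hb⟩ := Metric.isOpen_iff.1 hΩ z hz
  obtain ⟨n, hn⟩ := exists_nat_ge (max ‖z‖ (1 / ε))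
  refine ⟨n, (le_max_left _ _).trans hn, fun w hw => ?_⟩
  have h1 : ε ≤ dist z w := by
    by_contra h
    exact hw (hb (Metric.mem_ball'.2 (not_le.1 h)))
  refine le_trans ?_ h1
  rw [div_le_iff₀ (by positivity)]
  have h2 := (le_max_right _ _).trans hn
  rw [div_le_iff₀ hε] at h2
  linarith

lemma polePush_exh (n : ℕ) : PolePush (exh Ω n) Ω := by
  intro ζ hζ
  by_cases hn : ‖ζ‖ ≤ n
  · have : ∃ w, w ∉ Ω ∧ dist ζ w < 1 / ((n : ℝ) + 1) := by
      by_contra! h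
      exact hζ ⟨hn, h⟩
    obtain ⟨w, hw, hd⟩ := this
    have hne : ∀ z ∈ Ω, z - w ≠ 0 := by
      intro z hz h
      rw [sub_eq_zero] at h
      exact hw (h ▸ hz)
    have hdz : DifferentiableOn ℂ (fun z => z - w) Ω := by fun_prop
    refine ⟨fun z => (ζ - w) / (z - w), fun z => -1 / (z - w), dist ζ w * (n + 1),
      (differentiableOn_const _).div hdz hne, (differentiableOn_const _).div hdz hne,
      by positivity, by rwa [← lt_div_iff₀ (by positivity)], ?_, ?_⟩
    · rintro z ⟨-, hz⟩
      have h1 := hz w hw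
      have h0 : 0 < 1 / ((n : ℝ) + 1) := by positivity
      rw [norm_div, ← dist_eq_norm, ← dist_eq_norm, div_eq_mul_inv]
      gcongr
      rw [inv_le_comm₀ (by linarith) (by positivity), ← one_div]
      exact h1
    · intro z hz
      have := hne z (exh_subset n hz)
      field_simp
      ring
  · rw [not_le] at hn
    have h0 : 0 < ‖ζ‖ := lt_of_le_of_lt (Nat.cast_nonneg n) hn
    have hz0 : ζ ≠ 0 := norm_pos_iff.1 h0
    refine ⟨fun z => z / ζ, fun _ => 1 / ζ, n / ‖ζ‖, by fun_prop, by fun_prop, by positivity,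
      by rwa [div_lt_one h0], ?_, ?_⟩
    · rintro z ⟨hz, -⟩
      rw [norm_div]
      gcongr
    · intro z _
      field_simp

/-- Additive Cousin problem for the exhaustion: functions `L n` holomorphic near `exh Ω n` are the
consecutive differences of functions `H n` holomorphic inside `exh Ω n`. With Runge approximants
`A n` of `L n`, one takes `H n = ∑_{k < n} A k - ∑_{k ≥ n} (L k - A k)`. -/
lemma cousin {U : ℕ → Set ℂ} (hU : ∀ n, IsOpen (U n)) (hKU : ∀ n, exh Ω n ⊆ U n)
    {L : ℕ → ℂ → ℂ} (hL : ∀ n, DifferentiableOn ℂ (L n) (U n)) :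
    ∃ H : ℕ → ℂ → ℂ, (∀ n, DifferentiableOn ℂ (H n) (interior (exh Ω n))) ∧
      ∀ n, ∀ z ∈ exh Ω n, H (n + 1) z - H n z = L n z := by
  have hA := fun n => runge (isCompact_exh n) (exh_subset n) (polePush_exh n) (hU n) (hKU n) (hL n)
    (show (0 : ℝ) < (1 / 2) ^ n by positivity)
  choose A hA hLA using hA
  have hs : ∀ n, Summable fun j : ℕ => ((1 : ℝ) / 2) ^ (n + j) := by
    intro n
    simp only [pow_add]
    exact (summable_geometric_of_lt_one (by norm_num) (by norm_num)).mul_left _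
  have hb : ∀ n j, ∀ z ∈ exh Ω n, ‖L (n + j) z - A (n + j) z‖ ≤ (1 / 2) ^ (n + j) := fun n j z hz =>
    hLA (n + j) z (exh_mono (Nat.le_add_right n j) hz)
  refine ⟨fun n z => ∑ k ∈ Finset.range n, A k z - ∑' j, (L (n + j) z - A (n + j) z),
    fun n => ?_, fun n z hz => ?_⟩
  · have hi : interior (exh Ω n) ⊆ Ω := interior_subset.trans (exh_subset n)
    refine DifferentiableOn.sub (DifferentiableOn.fun_sum fun k _ => (hA k).mono hi) ?_
    refine differentiableOn_tsum_of_summable_norm (hs n) (fun j => ?_) isOpen_interior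
      (fun j z hz => hb n j z (interior_subset hz))
    refine DifferentiableOn.sub ((hL (n + j)).mono ?_) ((hA (n + j)).mono hi)
    exact interior_subset.trans ((exh_mono (Nat.le_add_right n j)).trans (hKU _))
  · have hsum : Summable fun j => (L (n + j) z - A (n + j) z) :=
      Summable.of_norm_bounded (hs n) fun j => hb n j z hz
    have e := hsum.tsum_eq_zero_add
    have e2 : ∑' j, (L (n + (j + 1)) z - A (n + (j + 1)) z) =
        ∑' j, (L (n + 1 + j) z - A (n + 1 + j) z) :=
      tsum_congr fun j => by rw [show n + (j + 1) = n + 1 + j by omega]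
    rw [e2, add_zero] at e
    beta_reduce
    rw [Finset.sum_range_succ, e]
    ring

end Exhaustion

/-! ### Gluing local families -/

/-- The exponential of the integral of a logarithmic derivative. -/
lemma exp_integral_logDeriv {y y' : ℝ → ℂ} (hy : LocACOn y y' 0)
    (hc : ContinuousOn y' (Set.Ici 0)) {X Y : ℝ} (hX : 0 ≤ X) (hXY : X ≤ Y)
    (h0 : ∀ x, X ≤ x → y x ≠ 0) : exp (∫ x in X..Y, y' x / y x) = y Y / y X := by
  have hyX := hy.mono hX
  have hIci : Set.Ici X ⊆ Set.Ici (0 : ℝ) := Set.Ici_subset_Ici.2 hX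
  -- extend `y'` and `y'/y` from `[X, ∞)` to continuous functions on the line
  have hd : Continuous fun x => y' (max X x) :=
    (hc.mono hIci).comp_continuous (by fun_prop) fun x => Set.mem_Ici.2 (le_max_left X x)
  have hm : Continuous fun x => y' (max X x) / y (max X x) :=
    ((hc.mono hIci).div hyX.continuousOn fun x hx => h0 x hx).comp_continuous (by fun_prop)
      fun x => Set.mem_Ici.2 (le_max_left X x)
  let Y₁ : ℝ → ℂ := fun x => y X + ∫ t in X..x, y' (max X t)
  let E : ℝ → ℂ := fun x => ∫ t in X..x, y' (max X t) / y (max X t)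
  have hY₁ : ∀ x, HasDerivAt Y₁ (y' (max X x)) x := fun x =>
    (hd.integral_hasStrictDerivAt X x).hasDerivAt.const_add _
  have hE : ∀ x, HasDerivAt E (y' (max X x) / y (max X x)) x := fun x =>
    (hm.integral_hasStrictDerivAt X x).hasDerivAt
  have hmax : ∀ x, X ≤ x → ∀ t ∈ Set.uIcc X x, max X t = t := by
    intro x hx t ht
    rw [Set.uIcc_of_le hx] at ht
    exact max_eq_right ht.1
  have hY₁y : ∀ x, X ≤ x → Y₁ x = y x := by
    intro x hx
    rw [hyX.2 x hx]
    refine congrArg (y X + ·) (intervalIntegral.integral_congr fun t ht => by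
      rw [hmax x hx t ht])
  have hEY : E Y = ∫ x in X..Y, y' x / y x :=
    intervalIntegral.integral_congr fun t ht => by
      rw [hmax Y hXY t ht]
  have hP : ∀ x, HasDerivAt (fun x => Y₁ x * exp (-E x))
      (y' (max X x) * exp (-E x) + Y₁ x * (exp (-E x) * -(y' (max X x) / y (max X x)))) x :=
    fun x => (hY₁ x).mul (hE x).neg.cexp
  have hconst := constant_of_has_deriv_right_zero (f := fun x => Y₁ x * exp (-E x)) (a := X) (b := Y)
    (fun x _ => (hP x).continuousAt.continuousWithinAt) (fun x hx => by
      have h1 := (hP x).hasDerivWithinAt (s := Set.Ici x)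
      have h2 := h0 x hx.1
      rw [max_eq_right hx.1, hY₁y x hx.1] at h1
      convert! h1 using 1
      field_simp
      ring) Y ⟨hXY, le_rfl⟩
  have hEX : E X = 0 := intervalIntegral.integral_same
  rw [hEX, hY₁y Y hXY, hY₁y X le_rfl, neg_zero, Complex.exp_zero, mul_one, Complex.exp_neg] at hconst
  rw [← hEY, ← hconst]
  have := h0 Y hXY
  have := Complex.exp_ne_zero (E Y)
  field_simp

/-- A fundamental system of `-y'' + (q - lam) y = 0`, jointly continuous in `(x, lam)` and entire
in `lam`. -/
structure FundFam (q : ℝ → ℂ) (θ θ' φ φ' : ℂ → ℝ → ℂ) : Prop where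
  sys : ∀ lam, FundSys (fun x => q x - lam) (θ lam) (θ' lam) (φ lam) (φ' lam)
  cθ : ContinuousOn (fun p : ℝ × ℂ => θ p.2 p.1) (Set.Ici (0 : ℝ) ×ˢ Set.univ)
  cθ' : ContinuousOn (fun p : ℝ × ℂ => θ' p.2 p.1) (Set.Ici (0 : ℝ) ×ˢ Set.univ)
  cφ : ContinuousOn (fun p : ℝ × ℂ => φ p.2 p.1) (Set.Ici (0 : ℝ) ×ˢ Set.univ)
  cφ' : ContinuousOn (fun p : ℝ × ℂ => φ' p.2 p.1) (Set.Ici (0 : ℝ) ×ˢ Set.univ)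
  dθ : ∀ x, 0 ≤ x → Differentiable ℂ fun lam => θ lam x
  dθ' : ∀ x, 0 ≤ x → Differentiable ℂ fun lam => θ' lam x
  dφ : ∀ x, 0 ≤ x → Differentiable ℂ fun lam => φ lam x
  dφ' : ∀ x, 0 ≤ x → Differentiable ℂ fun lam => φ' lam x

lemma exists_fundFam {q : ℝ → ℂ} (hq : LocallyIntegrableOn q (Set.Ici (0 : ℝ)) volume) :
    ∃ θ θ' φ φ', FundFam q θ θ' φ φ' := by
  have hq' : ∀ b, 0 ≤ b → IntervalIntegrable q volume 0 b := by
    intro b hb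
    rw [intervalIntegrable_iff_integrableOn_Icc_of_le hb]
    exact hq.integrableOn_compact_subset (fun x hx => hx.1) isCompact_Icc
  obtain ⟨θ, θ', h1, h2, h3, h4, h5⟩ := exists_fundamental hq' (1, 0)
  obtain ⟨φ, φ', k1, k2, k3, k4, k5⟩ := exists_fundamental hq' (0, 1)
  exact ⟨θ, θ', φ, φ', fun lam => ⟨(h1 lam).1, (k1 lam).1, (h1 lam).2.1, (h1 lam).2.2,
    (k1 lam).2.1, (k1 lam).2.2⟩, h2, h3, k2, k3, h4, h5, k4, k5⟩

namespace FundFam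

variable {q q' : ℝ → ℂ} {θ θ' φ φ' : ℂ → ℝ → ℂ} {Ω : Set ℂ}

lemma isSol (h : FundFam q θ θ' φ φ') (lam a b : ℂ) : IsSol (fun x => q x - lam) 0
    (fun x => a * θ lam x + b * φ lam x) (fun x => a * θ' lam x + b * φ' lam x) :=
  (h.sys lam).solθ.comb (h.sys lam).solφ a b

/-- Square integrable solutions form a line. -/
lemma proportional (h : FundFam q θ θ' φ φ') {lam : ℂ} (hl : lam ∈ NSet q q') {a b c d : ℂ}
    (hab : L2B fun x => a * θ lam x + b * φ lam x) (hcd : L2B fun x => c * θ lam x + d * φ lam x)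
    (hne : ¬(c = 0 ∧ d = 0)) : ∃ k, a = k * c ∧ b = k * d := by
  have hw := wronskian_eq_zero_of_mem_NSet hl (h.isSol lam a b) (h.isSol lam c d) hab hcd
  have hs := h.sys lam
  simp only [hs.θ0, hs.θ0', hs.φ0, hs.φ0', mul_one, mul_zero, add_zero, zero_add] at hw
  by_cases hc : c = 0
  · have hd : d ≠ 0 := fun hd => hne ⟨hc, hd⟩
    refine ⟨b / d, ?_, by field_simp⟩
    rw [hc, mul_zero, sub_zero] at hw
    rw [hc, mul_zero]
    exact (mul_eq_zero.1 hw).resolve_right hd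
  · refine ⟨a / c, by field_simp, ?_⟩
    field_simp
    linear_combination -hw

end FundFam

/-- The points of `Ω` around which there is a holomorphic family of square integrable solutions
without zeros on `[X, ∞)`. -/
def good (θ φ : ℂ → ℝ → ℂ) (Ω : Set ℂ) (X : ℝ) : Set ℂ :=
  {lam | ∃ ε > 0, Metric.ball lam ε ⊆ Ω ∧ ∃ c₁ c₂ : ℂ → ℂ,
    DifferentiableOn ℂ c₁ (Metric.ball lam ε) ∧ DifferentiableOn ℂ c₂ (Metric.ball lam ε) ∧
    ∀ mu ∈ Metric.ball lam ε, L2B (fun x => c₁ mu * θ mu x + c₂ mu * φ mu x) ∧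
      ∀ x, X ≤ x → c₁ mu * θ mu x + c₂ mu * φ mu x ≠ 0}

lemma isOpen_good (θ φ : ℂ → ℝ → ℂ) (Ω : Set ℂ) (X : ℝ) : IsOpen (good θ φ Ω X) := by
  rw [Metric.isOpen_iff]
  rintro lam ⟨ε, hε, hΩ, c₁, c₂, h1, h2, h3⟩
  refine ⟨ε, hε, fun mu hmu => ?_⟩
  have hs : Metric.ball mu (ε - dist mu lam) ⊆ Metric.ball lam ε :=
    Metric.ball_subset_ball' (by linarith)
  exact ⟨ε - dist mu lam, by linarith [Metric.mem_ball.1 hmu], hs.trans hΩ, c₁, c₂, h1.mono hs,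
    h2.mono hs, fun nu hnu => h3 nu (hs hnu)⟩

lemma good_mono {θ φ : ℂ → ℝ → ℂ} {Ω : Set ℂ} {X Y : ℝ} (hXY : X ≤ Y) :
    good θ φ Ω X ⊆ good θ φ Ω Y := by
  rintro lam ⟨ε, hε, hΩ, c₁, c₂, h1, h2, h3⟩
  exact ⟨ε, hε, hΩ, c₁, c₂, h1, h2, fun mu hmu =>
    ⟨(h3 mu hmu).1, fun x hx => (h3 mu hmu).2 x (hXY.trans hx)⟩⟩

lemma good_subset {θ φ : ℂ → ℝ → ℂ} {Ω : Set ℂ} {X : ℝ} : good θ φ Ω X ⊆ Ω := by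
  rintro lam ⟨ε, hε, hΩ, -⟩
  exact hΩ (Metric.mem_ball_self hε)

lemma FundFam.exists_mem_good {q q' : ℝ → ℂ} {θ θ' φ φ' : ℂ → ℝ → ℂ} {Ω : Set ℂ}
    (h : FundFam q θ θ' φ φ') (hΩ : IsOpen Ω) (hN : Ω ⊆ NSet q q') {lam : ℂ} (hl : lam ∈ Ω) :
    ∃ n : ℕ, lam ∈ good θ φ Ω n := by
  obtain ⟨ε, hε, X, hX, c₁, c₂, h1, h2, h3⟩ :=
    exists_local_section h.sys h.dθ h.dθ' h.dφ h.dφ' (hN hl)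
  obtain ⟨δ, hδ, hb⟩ := Metric.isOpen_iff.1 hΩ lam hl
  obtain ⟨n, hn⟩ := exists_nat_ge X
  have hs : Metric.ball lam (min ε δ) ⊆ Metric.ball lam ε := Metric.ball_subset_ball (min_le_left _ _)
  exact ⟨n, min ε δ, lt_min hε hδ, (Metric.ball_subset_ball (min_le_right _ _)).trans hb, c₁, c₂,
    h1.mono hs, h2.mono hs, fun mu hmu => ⟨(h3 mu (hs hmu)).1, fun x hx =>
      (h3 mu (hs hmu)).2 x (hn.trans hx)⟩⟩

namespace FundFam

variable {q q' : ℝ → ℂ} {θ θ' φ φ' : ℂ → ℝ → ℂ} {Ω : Set ℂ} {a b : ℂ → ℂ} {X Y : ℝ}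

/-- Any pointwise choice `(a, b)` of nontrivial square integrable solutions is pointwise
proportional to a local holomorphic family. -/
lemma local_of_good (h : FundFam q θ θ' φ φ') (hN : Ω ⊆ NSet q q')
    (hab : ∀ lam ∈ Ω, L2B (fun x => a lam * θ lam x + b lam * φ lam x) ∧ ¬(a lam = 0 ∧ b lam = 0))
    {lam : ℂ} (hl : lam ∈ good θ φ Ω X) :
    ∃ ε > 0, ∃ c₁ c₂ : ℂ → ℂ,
      DifferentiableOn ℂ c₁ (Metric.ball lam ε) ∧ DifferentiableOn ℂ c₂ (Metric.ball lam ε) ∧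
      ∀ mu ∈ Metric.ball lam ε, (∀ x, X ≤ x → c₁ mu * θ mu x + c₂ mu * φ mu x ≠ 0) ∧
        ∃ k, k ≠ 0 ∧ a mu = k * c₁ mu ∧ b mu = k * c₂ mu := by
  obtain ⟨ε, hε, hΩ, c₁, c₂, h1, h2, h3⟩ := hl
  refine ⟨ε, hε, c₁, c₂, h1, h2, fun mu hmu => ⟨(h3 mu hmu).2, ?_⟩⟩
  obtain ⟨k, hka, hkb⟩ := h.proportional (hN (hΩ hmu)) (hab mu (hΩ hmu)).1 (h3 mu hmu).1
    (fun hc => (h3 mu hmu).2 X le_rfl (by rw [hc.1, hc.2]; ring))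
  refine ⟨k, fun hk => (hab mu (hΩ hmu)).2 ?_, hka, hkb⟩
  rw [hka, hkb, hk, zero_mul, zero_mul]
  exact ⟨rfl, rfl⟩

lemma ne_zero_of_good (h : FundFam q θ θ' φ φ') (hN : Ω ⊆ NSet q q')
    (hab : ∀ lam ∈ Ω, L2B (fun x => a lam * θ lam x + b lam * φ lam x) ∧ ¬(a lam = 0 ∧ b lam = 0))
    {lam : ℂ} (hl : lam ∈ good θ φ Ω X) {x : ℝ} (hx : X ≤ x) :
    a lam * θ lam x + b lam * φ lam x ≠ 0 := by
  obtain ⟨ε, hε, c₁, c₂, -, -, h3⟩ := h.local_of_good hN hab hl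
  obtain ⟨h4, k, hk, hka, hkb⟩ := h3 lam (Metric.mem_ball_self hε)
  rw [hka, hkb, mul_assoc, mul_assoc, ← mul_add]
  exact mul_ne_zero hk (h4 x hx)

/-- The coefficients normalised by the value of the solution at `X` are holomorphic. -/
lemma differentiableOn_normalised (h : FundFam q θ θ' φ φ') (hN : Ω ⊆ NSet q q')
    (hab : ∀ lam ∈ Ω, L2B (fun x => a lam * θ lam x + b lam * φ lam x) ∧ ¬(a lam = 0 ∧ b lam = 0))
    (hX : 0 ≤ X) :
    DifferentiableOn ℂ (fun mu => a mu / (a mu * θ mu X + b mu * φ mu X)) (good θ φ Ω X) ∧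
      DifferentiableOn ℂ (fun mu => b mu / (a mu * θ mu X + b mu * φ mu X)) (good θ φ Ω X) := by
  have key : ∀ lam ∈ good θ φ Ω X,
      DifferentiableAt ℂ (fun mu => a mu / (a mu * θ mu X + b mu * φ mu X)) lam ∧
      DifferentiableAt ℂ (fun mu => b mu / (a mu * θ mu X + b mu * φ mu X)) lam := by
    intro lam hl
    obtain ⟨ε, hε, c₁, c₂, h1, h2, h3⟩ := h.local_of_good hN hab hl
    have hB := Metric.ball_mem_nhds lam hε
    have h1' := h1.differentiableAt hB
    have h2' := h2.differentiableAt hB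
    have hden : DifferentiableAt ℂ (fun mu => c₁ mu * θ mu X + c₂ mu * φ mu X) lam :=
      (h1'.mul (h.dθ X hX lam)).add (h2'.mul (h.dφ X hX lam))
    have hne := (h3 lam (Metric.mem_ball_self hε)).1 X le_rfl
    constructor
    · refine (h1'.div hden hne).congr_of_eventuallyEq ?_
      filter_upwards [hB] with mu hmu
      obtain ⟨h4, k, hk, hka, hkb⟩ := h3 mu hmu
      rw [hka, hkb, mul_assoc, mul_assoc, ← mul_add, mul_div_mul_left _ _ hk]
      rfl
    · refine (h2'.div hden hne).congr_of_eventuallyEq ?_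
      filter_upwards [hB] with mu hmu
      obtain ⟨h4, k, hk, hka, hkb⟩ := h3 mu hmu
      rw [hka, hkb, mul_assoc, mul_assoc, ← mul_add, mul_div_mul_left _ _ hk]
      rfl
  exact ⟨fun lam hl => (key lam hl).1.differentiableWithinAt,
    fun lam hl => (key lam hl).2.differentiableWithinAt⟩

/-- The integrated logarithmic derivative of the square integrable solution is holomorphic. -/
lemma differentiableOn_integral_logDeriv (h : FundFam q θ θ' φ φ') (hN : Ω ⊆ NSet q q')
    (hab : ∀ lam ∈ Ω, L2B (fun x => a lam * θ lam x + b lam * φ lam x) ∧ ¬(a lam = 0 ∧ b lam = 0))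
    (hX : 0 ≤ X) (hXY : X ≤ Y) :
    DifferentiableOn ℂ (fun mu => ∫ x in X..Y,
      (a mu * θ' mu x + b mu * φ' mu x) / (a mu * θ mu x + b mu * φ mu x)) (good θ φ Ω X) := by
  intro lam hl
  obtain ⟨ε, hε, c₁, c₂, h1, h2, h3⟩ := h.local_of_good hN hab hl
  let g : ℂ → ℝ → ℂ := fun mu x =>
    (c₁ mu * θ' mu x + c₂ mu * φ' mu x) / (c₁ mu * θ mu x + c₂ mu * φ mu x)
  have hsub : Set.Icc X Y ×ˢ Metric.ball lam ε ⊆ Set.Ici (0 : ℝ) ×ˢ Set.univ := by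
    rintro ⟨x, mu⟩ ⟨hx, -⟩
    exact ⟨hX.trans hx.1, trivial⟩
  have hmaps : Set.MapsTo (fun p : ℝ × ℂ => p.2) (Set.Icc X Y ×ˢ Metric.ball lam ε)
      (Metric.ball lam ε) := fun p hp => hp.2
  have hc₁ := h1.continuousOn.comp continuousOn_snd hmaps
  have hc₂ := h2.continuousOn.comp continuousOn_snd hmaps
  have hgc : ContinuousOn (fun p : ℝ × ℂ => g p.2 p.1) (Set.Icc X Y ×ˢ Metric.ball lam ε) := by
    refine ContinuousOn.div ((hc₁.mul (h.cθ'.mono hsub)).add (hc₂.mul (h.cφ'.mono hsub)))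
      ((hc₁.mul (h.cθ.mono hsub)).add (hc₂.mul (h.cφ.mono hsub))) ?_
    rintro ⟨x, mu⟩ ⟨hx, hmu⟩
    exact (h3 mu hmu).1 x hx.1
  have hcb : Metric.closedBall lam (ε / 2) ⊆ Metric.ball lam ε :=
    Metric.closedBall_subset_ball (by linarith)
  have hbb : Metric.ball lam (ε / 2) ⊆ Metric.ball lam ε := Metric.ball_subset_ball (by linarith)
  obtain ⟨M, hM⟩ := (isCompact_Icc.prod (isCompact_closedBall lam (ε / 2))).exists_bound_of_continuousOn
    (hgc.mono (Set.prod_mono subset_rfl hcb))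
  have hgx : ∀ mu ∈ Metric.ball lam ε, ContinuousOn (g mu) (Set.Icc X Y) := fun mu hmu =>
    hgc.comp (f := fun x : ℝ => (x, mu)) (by fun_prop) fun x hx => ⟨hx, hmu⟩
  have hG : DifferentiableOn ℂ (fun mu => ∫ x in X..Y, g mu x) (Metric.ball lam (ε / 2)) := by
    refine differentiableOn_intervalIntegral Metric.isOpen_ball hXY (B := fun _ => M)
      intervalIntegrable_const (fun mu hmu => ?_) (fun mu hmu t ht => ?_) fun t ht => ?_
    · exact ((hgx mu (hbb hmu)).mono Set.Ioc_subset_Icc_self).aestronglyMeasurable measurableSet_Ioc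
    · exact hM (t, mu) ⟨Set.Ioc_subset_Icc_self ht, Metric.ball_subset_closedBall hmu⟩
    · have ht0 : 0 ≤ t := hX.trans ht.1.le
      have e1 := h1.mono hbb
      have e2 := h2.mono hbb
      refine DifferentiableOn.div
        ((e1.mul (h.dθ' t ht0).differentiableOn).add (e2.mul (h.dφ' t ht0).differentiableOn))
        ((e1.mul (h.dθ t ht0).differentiableOn).add (e2.mul (h.dφ t ht0).differentiableOn)) ?_
      exact fun mu hmu => (h3 mu (hbb hmu)).1 t ht.1.le
  have hB := Metric.ball_mem_nhds lam (half_pos hε)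
  refine ((hG.differentiableAt hB).congr_of_eventuallyEq ?_).differentiableWithinAt
  filter_upwards [hB] with mu hmu
  obtain ⟨-, k, hk, hka, hkb⟩ := h3 mu (hbb hmu)
  refine intervalIntegral.integral_congr fun x _ => ?_
  simp only [g]
  rw [hka, hkb, mul_assoc, mul_assoc, mul_assoc, mul_assoc, ← mul_add, ← mul_add,
    mul_div_mul_left _ _ hk]

/-- The line bundle of square integrable solutions over `Ω` is trivial: it has a holomorphic
section consisting of nontrivial solutions. With `exh Ω n` inside the set of parameters for which
the solutions have no zeros on `[ν n, ∞)`, the solutions normalised at `ν n` and at `ν (n + 1)`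
differ over `exh Ω n` by the factor `exp (L n)`, where `L n` is the integrated logarithmic
derivative; writing `L n = H (n + 1) - H n`, the solutions normalised at `ν n`, multiplied by
`exp (H n)`, glue. -/
theorem exists_global_section (h : FundFam q θ θ' φ φ') (hΩ : IsOpen Ω) (hN : Ω ⊆ NSet q q') :
    ∃ c₁ c₂ : ℂ → ℂ, DifferentiableOn ℂ c₁ Ω ∧ DifferentiableOn ℂ c₂ Ω ∧
      ∀ lam ∈ Ω, L2B (fun x => c₁ lam * θ lam x + c₂ lam * φ lam x) ∧
        ∃ x, 0 ≤ x ∧ c₁ lam * θ lam x + c₂ lam * φ lam x ≠ 0 := by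
  -- a pointwise choice of nontrivial square integrable solutions
  have hpt : ∀ lam, ∃ a b : ℂ, lam ∈ Ω →
      (L2B (fun x => a * θ lam x + b * φ lam x) ∧ ¬(a = 0 ∧ b = 0)) := by
    intro lam
    by_cases hl : lam ∈ Ω
    · obtain ⟨n, ε, hε, -, c₁, c₂, -, -, h3⟩ := h.exists_mem_good hΩ hN hl
      obtain ⟨h4, h5⟩ := h3 lam (Metric.mem_ball_self hε)
      exact ⟨c₁ lam, c₂ lam, fun _ => ⟨h4, fun hc => h5 n le_rfl (by rw [hc.1, hc.2]; ring)⟩⟩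
    · exact ⟨0, 0, fun hl' => absurd hl' hl⟩
  choose a b hab using hpt
  let ψ : ℂ → ℝ → ℂ := fun lam x => a lam * θ lam x + b lam * φ lam x
  -- nonvanishing radii for the compact exhaustion
  have hν₀ : ∀ n, ∃ k : ℕ, exh Ω n ⊆ good θ φ Ω k := by
    intro n
    refine (isCompact_exh n).elim_directed_cover (fun k : ℕ => good θ φ Ω k)
      (fun k => isOpen_good θ φ Ω k) (fun z hz => ?_) ?_
    · exact Set.mem_iUnion.2 (h.exists_mem_good hΩ hN (exh_subset n hz))
    · exact directed_of_isDirected_le fun i j hij => good_mono (by exact_mod_cast hij)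
  choose ν₀ hν₀ using hν₀
  let ν : ℕ → ℕ := fun n => ∑ k ∈ Finset.range (n + 1), ν₀ k
  have hνle : ∀ n, ν n ≤ ν (n + 1) := fun n => by
    simp only [ν]
    rw [Finset.sum_range_succ _ (n + 1)]
    omega
  have hν : ∀ n, exh Ω n ⊆ good θ φ Ω (ν n : ℕ) := fun n => (hν₀ n).trans (good_mono (by
    have : ν₀ n ≤ ν n := Finset.single_le_sum (f := ν₀) (fun _ _ => Nat.zero_le _)
      (Finset.self_mem_range_succ n)
    exact_mod_cast this))
  have hν0 : ∀ n, (0 : ℝ) ≤ (ν n : ℕ) := fun n => Nat.cast_nonneg _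
  have hνr : ∀ n, ((ν n : ℕ) : ℝ) ≤ (ν (n + 1) : ℕ) := fun n => by exact_mod_cast hνle n
  obtain ⟨H, hHd, hHL⟩ := cousin (fun n => isOpen_good θ φ Ω (ν n : ℕ)) hν fun n =>
    h.differentiableOn_integral_logDeriv hN hab (hν0 n) (hνr n)
  -- the scaling factor computed at level `n` does not depend on `n`
  let κ : ℕ → ℂ → ℂ := fun n lam => exp (H n lam) / ψ lam (ν n : ℕ)
  have hψ : ∀ n, ∀ lam ∈ exh Ω n, ∀ x : ℝ, ((ν n : ℕ) : ℝ) ≤ x → ψ lam x ≠ 0 :=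
    fun n lam hl x hx => h.ne_zero_of_good hN hab (hν n hl) hx
  have hκs : ∀ n, ∀ lam ∈ exh Ω n, κ (n + 1) lam = κ n lam := by
    intro n lam hl
    have hs := h.isSol lam (a lam) (b lam)
    have e := exp_integral_logDeriv hs.1 hs.2.continuousOn (hν0 n) (hνr n) (hψ n lam hl)
    rw [← hHL n lam hl, Complex.exp_sub] at e
    have n1 := hψ n lam hl _ le_rfl
    have n2 := hψ n lam hl _ (hνr n)
    have n3 := Complex.exp_ne_zero (H n lam)
    change exp (H (n + 1) lam) / exp (H n lam) = ψ lam (ν (n + 1) : ℕ) / ψ lam (ν n : ℕ) at e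
    simp only [κ]
    rw [div_eq_div_iff n3 n1] at e
    rw [div_eq_div_iff n2 n1, e]
    ring
  have hκ : ∀ m n, m ≤ n → ∀ lam ∈ exh Ω m, κ n lam = κ m lam := by
    intro m n hmn lam hl
    induction n, hmn using Nat.le_induction with
    | base => rfl
    | succ n hn ih => rw [hκs n lam (exh_mono hn hl), ih]
  have hidx : ∀ lam, ∃ n, lam ∈ Ω → lam ∈ exh Ω n := by
    intro lam
    by_cases hl : lam ∈ Ω
    · obtain ⟨n, hn⟩ := exists_mem_exh hΩ hl
      exact ⟨n, fun _ => hn⟩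
    · exact ⟨0, fun hl' => absurd hl' hl⟩
  choose idx hidx using hidx
  have hκidx : ∀ n, ∀ lam ∈ exh Ω n, κ (idx lam) lam = κ n lam := by
    intro n lam hl
    rcases le_total (idx lam) n with hle | hle
    · exact (hκ _ _ hle lam (hidx lam (exh_subset n hl))).symm
    · exact hκ _ _ hle lam hl
  have hdiff : ∀ d : ℂ → ℂ,
      (∀ n, DifferentiableOn ℂ (fun mu => d mu / ψ mu (ν n : ℕ)) (good θ φ Ω (ν n : ℕ))) →
      DifferentiableOn ℂ (fun lam => κ (idx lam) lam * d lam) Ω := by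
    intro d hd lam hl
    have hi : interior (exh Ω (idx lam + 1)) ∈ 𝓝 lam :=
      isOpen_interior.mem_nhds (exh_subset_interior _ (hidx lam hl))
    have h1 := (hHd (idx lam + 1)).differentiableAt hi
    have h2 := ((hd (idx lam + 1)).mono (interior_subset.trans (hν _))).differentiableAt hi
    refine ((h1.cexp.mul h2).congr_of_eventuallyEq ?_).differentiableWithinAt
    filter_upwards [hi] with mu hmu
    rw [hκidx (idx lam + 1) mu (interior_subset hmu)]
    simp only [κ, Pi.mul_apply]
    ring
  refine ⟨fun lam => κ (idx lam) lam * a lam, fun lam => κ (idx lam) lam * b lam,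
    hdiff a fun n => (h.differentiableOn_normalised hN hab (hν0 n)).1,
    hdiff b fun n => (h.differentiableOn_normalised hN hab (hν0 n)).2, fun lam hl => ?_⟩
  have hs := h.isSol lam (a lam) (b lam)
  have h1 := (hab lam hl).1
  have hκ0 : κ (idx lam) lam ≠ 0 :=
    div_ne_zero (Complex.exp_ne_zero _) (hψ _ lam (hidx lam hl) _ le_rfl)
  constructor
  · have := L2B.comb hs.1.continuousOn hs.1.continuousOn h1 h1 (κ (idx lam) lam) 0
    refine (congrArg L2B (funext fun x => ?_)).mp this
    ring
  · refine ⟨(ν (idx lam) : ℕ), hν0 _, ?_⟩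
    rw [mul_assoc, mul_assoc, ← mul_add]
    exact mul_ne_zero hκ0 (hψ _ lam (hidx lam hl) _ le_rfl)

end FundFam

/-- Existence of the Weyl solution `η(x, lam)` on an open connected `Ω ⊆ 𝒩`:
`η, η'` are continuous on `ℝ₊ × Ω` and analytic in `lam ∈ Ω` for each fixed
`x ∈ ℝ₊`, and for each `lam ∈ Ω` the function `η(·, lam)` is a nontrivial
`L₂(ℝ₊)`-solution of `-y'' + (q - lam) y = 0`, unique in `L₂(ℝ₊)` up to a
constant factor. -/
theorem statement9 (q q' : ℝ → ℂ) (x₀ C : ℝ) (hx₀ : 0 ≤ x₀)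
    (hA : CondA q q' x₀ C)
    (Ω : Set ℂ) (hΩN : Ω ⊆ NSet q q') (hΩo : IsOpen Ω) (hΩc : IsConnected Ω) :
    ∃ η ηd : ℂ → ℝ → ℂ,
      ContinuousOn (fun z : ℝ × ℂ => η z.2 z.1) (Set.Ici (0:ℝ) ×ˢ Ω) ∧
      ContinuousOn (fun z : ℝ × ℂ => ηd z.2 z.1) (Set.Ici (0:ℝ) ×ˢ Ω) ∧
      (∀ x : ℝ, 0 ≤ x → AnalyticOnNhd ℂ (fun lam => η lam x) Ω) ∧
      (∀ x : ℝ, 0 ≤ x → AnalyticOnNhd ℂ (fun lam => ηd lam x) Ω) ∧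
      ∀ lam ∈ Ω,
        IsSol (fun x => q x - lam) 0 (η lam) (ηd lam) ∧
        NontrivialSol (η lam) ∧
        MemL2 (fun _ => 1) (η lam) ∧
        ∀ y y', IsSol (fun x => q x - lam) 0 y y' → MemL2 (fun _ => 1) y →
          ∃ c : ℂ, (∀ x, 0 ≤ x → y x = c * η lam x) ∧
            ∀ x, 0 ≤ x → y' x = c * ηd lam x := by
  obtain ⟨θ, θ', φ, φ', h⟩ := exists_fundFam hA.1
  obtain ⟨c₁, c₂, h1, h2, hc⟩ := h.exists_global_section hΩo hΩN
  have hsub : Set.Ici (0 : ℝ) ×ˢ Ω ⊆ Set.Ici (0 : ℝ) ×ˢ Set.univ :=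
    Set.prod_mono subset_rfl (Set.subset_univ _)
  have hmaps : Set.MapsTo (fun p : ℝ × ℂ => p.2) (Set.Ici (0 : ℝ) ×ˢ Ω) Ω := fun p hp => hp.2
  have k1 := h1.continuousOn.comp continuousOn_snd hmaps
  have k2 := h2.continuousOn.comp continuousOn_snd hmaps
  refine ⟨fun lam x => c₁ lam * θ lam x + c₂ lam * φ lam x,
    fun lam x => c₁ lam * θ' lam x + c₂ lam * φ' lam x,
    (k1.mul (h.cθ.mono hsub)).add (k2.mul (h.cφ.mono hsub)),
    (k1.mul (h.cθ'.mono hsub)).add (k2.mul (h.cφ'.mono hsub)),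
    fun x hx => DifferentiableOn.analyticOnNhd ((h1.mul (h.dθ x hx).differentiableOn).add
      (h2.mul (h.dφ x hx).differentiableOn)) hΩo,
    fun x hx => DifferentiableOn.analyticOnNhd ((h1.mul (h.dθ' x hx).differentiableOn).add
      (h2.mul (h.dφ' x hx).differentiableOn)) hΩo, fun lam hl => ?_⟩
  have hs := h.isSol lam (c₁ lam) (c₂ lam)
  have hF := h.sys lam
  obtain ⟨hL, hne⟩ := hc lam hl
  have hne0 : ¬(c₁ lam = 0 ∧ c₂ lam = 0) := by
    rintro ⟨e1, e2⟩
    obtain ⟨x, -, hx⟩ := hne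
    exact hx (by rw [e1, e2]; ring)
  refine ⟨hs, hne, (memL2_iff_L2B hs.1.continuousOn).2 hL, fun y y' hy hy2 => ?_⟩
  have hy2' := (memL2_iff_L2B hy.1.continuousOn).1 hy2
  have hrep := fun x hx => hF.repr hy (x := x) hx
  have hy3 : L2B fun x => y 0 * θ lam x + y' 0 * φ lam x := by
    obtain ⟨I, hI⟩ := hy2'
    refine ⟨I, fun T hT => le_of_eq_of_le (intervalIntegral.integral_congr fun x hx => ?_) (hI T hT)⟩
    rw [Set.uIcc_of_le hT] at hx
    beta_reduce
    rw [(hrep x hx.1).1]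
  obtain ⟨k, ha, hb⟩ := h.proportional (hΩN hl) hy3 hL hne0
  refine ⟨k, fun x hx => ?_, fun x hx => ?_⟩
  · rw [(hrep x hx).1, ha, hb]
    ring
  · rw [(hrep x hx).2, ha, hb]
    ring
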